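/- arXiv:1811.04501 — 5 statements merged into one kernel-verified Lean document; each statement's English description precedes it below -/
import Mathlib

section
/- For every real number s > 2, the double series ∑_{m≥1} ∑_{n≥1} m / (n·(m+n)^{2(s−1)}) converges; that is, the family ( m / (n·(m+n)^{2(s−1)}) )_{(m,n)∈ℤ_{≥1}×ℤ_{≥1}} of nonnegative reals is summable. -/
/-!
The series is the case `a = -1`, `b = 1`, `c = 2 (s - 1)` of the Tornheim double series
`∑ 1 / (m ^ a * n ^ b * (m + n) ^ c)`. Splitting `c = u + v` with `u, v ≥ 0` gives
`m ^ u * n ^ v ≤ (m + n) ^ c`, so the terms are at most `m ^ (-(a + u)) * n ^ (-(b + v))`. The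
conditions `1 < a + c`, `1 < b + c` and `2 < a + b + c` are what is needed to choose the splitting
with `1 < a + u` and `1 < b + v`, and then the majorant is a product of two convergent `p`-series.
-/

theorem rpow_mul_rpow_le_add_rpow_add {x y u v : ℝ} (hx : 0 ≤ x) (hy : 0 ≤ y)
    (hu : 0 ≤ u) (hv : 0 ≤ v) : x ^ u * y ^ v ≤ (x + y) ^ (u + v) := by
  rw [Real.rpow_add_of_nonneg (add_nonneg hx hy) hu hv]
  gcongr
  · exact le_add_of_nonneg_right hy
  · exact le_add_of_nonneg_left hx

theorem inv_rpow_mul_rpow_mul_add_rpow_le {x y u v : ℝ} (hx : 0 < x) (hy : 0 < y)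
    (hu : 0 ≤ u) (hv : 0 ≤ v) (a b : ℝ) :
    (x ^ a * y ^ b * (x + y) ^ (u + v))⁻¹ ≤ (x ^ (a + u))⁻¹ * (y ^ (b + v))⁻¹ := by
  calc (x ^ a * y ^ b * (x + y) ^ (u + v))⁻¹
      ≤ (x ^ a * y ^ b * (x ^ u * y ^ v))⁻¹ := by
        gcongr
        exact rpow_mul_rpow_le_add_rpow_add hx.le hy.le hu hv
    _ = (x ^ (a + u))⁻¹ * (y ^ (b + v))⁻¹ := by
        rw [Real.rpow_add hx, Real.rpow_add hy, mul_mul_mul_comm, mul_inv]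

theorem exists_nonneg_add_eq_one_lt_add {a b c : ℝ} (hc : 0 ≤ c) (hac : 1 < a + c)
    (hbc : 1 < b + c) (habc : 2 < a + b + c) :
    ∃ u v : ℝ, 0 ≤ u ∧ 0 ≤ v ∧ u + v = c ∧ 1 < a + u ∧ 1 < b + v := by
  -- The constraints on `u` say that it lies between the two bounds averaged here.
  let u := (max 0 (1 - a) + min c (c + b - 1)) / 2
  refine ⟨u, c - u, ?_, ?_, add_sub_cancel u c, ?_, ?_⟩ <;>
    rcases max_cases 0 (1 - a) with h | h <;>
    rcases min_cases c (c + b - 1) with h' | h' <;>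
    grind

theorem summable_pnat_inv_rpow {p : ℝ} (hp : 1 < p) :
    Summable fun n : ℕ+ => ((n : ℝ) ^ p)⁻¹ :=
  (Real.summable_nat_rpow_inv.2 hp).comp_injective PNat.coe_injective

theorem summable_tornheim {a b c : ℝ} (hc : 0 ≤ c) (hac : 1 < a + c) (hbc : 1 < b + c)
    (habc : 2 < a + b + c) :
    Summable fun p : ℕ+ × ℕ+ =>
      ((p.1 : ℝ) ^ a * (p.2 : ℝ) ^ b * ((p.1 : ℝ) + (p.2 : ℝ)) ^ c)⁻¹ := by
  obtain ⟨u, v, hu, hv, rfl, hau, hbv⟩ := exists_nonneg_add_eq_one_lt_add hc hac hbc habc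
  have majorant_summable : Summable fun p : ℕ+ × ℕ+ =>
      ((p.1 : ℝ) ^ (a + u))⁻¹ * ((p.2 : ℝ) ^ (b + v))⁻¹ :=
    (summable_pnat_inv_rpow hau).mul_of_nonneg (summable_pnat_inv_rpow hbv)
      (fun m => by positivity) (fun n => by positivity)
  refine majorant_summable.of_nonneg_of_le (fun p => by positivity) fun ⟨m, n⟩ => ?_
  exact inv_rpow_mul_rpow_mul_add_rpow_le (Nat.cast_pos.2 m.pos) (Nat.cast_pos.2 n.pos) hu hv a b

/-- For every real `s > 2` the double series `∑_{m≥1} ∑_{n≥1} m/(n (m+n)^{2(s-1)})`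
converges: the corresponding family of nonnegative reals is summable. -/
theorem stmt_4 (s : ℝ) (hs : 2 < s) :
    Summable (fun p : ℕ+ × ℕ+ =>
      (p.1 : ℝ) / ((p.2 : ℝ) * ((p.1 : ℝ) + (p.2 : ℝ)) ^ (2 * (s - 1)))) := by
  have tornheim := summable_tornheim (a := -1) (b := 1) (c := 2 * (s - 1))
    (by linarith) (by linarith) (by linarith) (by linarith)
  refine tornheim.congr fun p => ?_
  rw [Real.rpow_neg_one, Real.rpow_one, mul_assoc, mul_inv, inv_inv, div_eq_mul_inv]
end

section
/- Let γ̃ : ℝ → ℝ be continuously differentiable with γ̃'(θ) > 0 and γ̃(θ+2π) = γ̃(θ) + 2π for all θ. For t ∈ [0,1] set γ̃_t = t·γ̃ + (1−t)·id, and let η_t denote the inverse function of γ̃_t. Then for integers m < 0 < n, setting t = n/(|m|+n), one has (1/2π)∫₀^{2π} e^{−imθ} e^{inγ̃(θ)} dθ = (1/2π)∫₀^{2π} e^{i(|m|+n)φ} η_t'(φ) dφ; and for integers n < 0 < m, setting t = |n|/(m+|n|), one has (1/2π)∫₀^{2π} e^{−imθ} e^{inγ̃(θ)} dθ = (1/2π)∫₀^{2π}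 e^{−i(m+|n|)φ} η_t'(φ) dφ. -/
open scoped Real

/-!
With `t = n / (n - m)` the phase is a multiple of the interpolated map:
`-m θ + n γ θ = (n - m) γ_t θ`. When `m` and `n` have opposite signs, `t` lies in `(0, 1)`, so the
distances between the points `γ_t θ` are at least `1 - t` times those between the `θ`, for any
monotone `γ`. Hence `η_t` is Lipschitz, and absolutely continuous functions admit the substitution
`θ = η_t φ`. It maps `[0, 2π]` onto an interval of length `2π`, which by periodicity of the
integrand can be moved back to `[0, 2π]`.
-/

section ChangeOfVariables

open Filter MeasureTheory Set

variable {f : ℝ → ℝ} {a b : ℝ}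

theorem absolutelyContinuousOnInterval_comp_of_lipschitzOnWith
    {X Y : Type*} [PseudoMetricSpace X] [PseudoMetricSpace Y] {f : ℝ → X} {Φ : X → Y} {K : NNReal}
    (hΦ : LipschitzOnWith K Φ (f '' uIcc a b)) (hf : AbsolutelyContinuousOnInterval f a b) :
    AbsolutelyContinuousOnInterval (Φ ∘ f) a b := by
  refine squeeze_zero' (.of_forall fun E => Finset.sum_nonneg fun i _ => dist_nonneg) ?_
    (by simpa using Tendsto.const_mul (K : ℝ) hf)
  filter_upwards [mem_inf_of_right (mem_principal_self _)] with E hE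
  rw [Finset.mul_sum]
  refine Finset.sum_le_sum fun i hi => ?_
  obtain ⟨hleft, hright⟩ := hE.1 i hi
  exact hΦ.dist_le_mul _ (mem_image_of_mem f hleft) _ (mem_image_of_mem f hright)

theorem integral_deriv_mul_comp_of_absolutelyContinuousOnInterval
    (hf : AbsolutelyContinuousOnInterval f a b) {g : ℝ → ℝ} (hg : Continuous g) :
    ∫ x in a..b, deriv f x * g (f x) = ∫ u in f a..f b, g u := by
  set Φ : ℝ → ℝ := fun y => ∫ u in f a..y, g u with hΦ_def
  have hΦ (y : ℝ) : HasDerivAt Φ (g y) y := hg.integral_hasStrictDerivAt (f a) y |>.hasDerivAt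
  have hΦ_contDiff : ContDiff ℝ 1 Φ :=
    contDiff_one_iff_deriv.2
      ⟨fun y => (hΦ y).differentiableAt, by rwa [funext fun y => (hΦ y).deriv]⟩
  have hΦ_comp : AbsolutelyContinuousOnInterval (Φ ∘ f) a b := by
    obtain ⟨K, hK⟩ := hΦ_contDiff.contDiffOn.exists_lipschitzOnWith one_ne_zero
      (isPreconnected_uIcc.image f hf.continuousOn).ordConnected.convex
      (isCompact_uIcc.image_of_continuousOn hf.continuousOn)
    exact absolutelyContinuousOnInterval_comp_of_lipschitzOnWith hK hf
  calc ∫ x in a..b, deriv f x * g (f x)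
      = ∫ x in a..b, deriv (Φ ∘ f) x := by
        refine intervalIntegral.integral_congr_ae ?_
        filter_upwards [hf.ae_differentiableAt] with x hx hxab
        have hfx := (hx (uIoc_subset_uIcc hxab)).hasDerivAt
        rw [((hΦ (f x)).comp x hfx).deriv, mul_comm]
    _ = Φ (f b) - Φ (f a) := hΦ_comp.integral_deriv_eq_sub
    _ = ∫ u in f a..f b, g u := by simp only [hΦ_def, intervalIntegral.integral_same, sub_zero]

variable {E : Type*} [NormedAddCommGroup E] [NormedSpace ℝ E] [CompleteSpace E]

theorem integral_deriv_smul_comp_of_absolutelyContinuousOnInterval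
    (hf : AbsolutelyContinuousOnInterval f a b) {g : ℝ → E} (hg : Continuous g) :
    ∫ x in a..b, deriv f x • g (f x) = ∫ u in f a..f b, g u := by
  -- Continuous linear functionals commute with both integrals, so it is enough to treat `E = ℝ`.
  refine (SeparatingDual.eq_iff_forall_dual_eq (R := ℝ)).2 fun ψ => ?_
  have hint : IntervalIntegrable (fun x => deriv f x • g (f x)) volume a b :=
    hf.intervalIntegrable_deriv.smul_continuousOn (hg.comp_continuousOn hf.continuousOn)
  rw [← ψ.intervalIntegral_comp_comm hint,
    ← ψ.intervalIntegral_comp_comm (hg.intervalIntegrable _ _)]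
  simpa only [map_smul, smul_eq_mul, Function.comp_apply] using
    integral_deriv_mul_comp_of_absolutelyContinuousOnInterval hf (ψ.continuous.comp hg)

theorem integral_comp_eq_integral_deriv_smul_of_antilipschitzWith {F e : ℝ → ℝ} {K : NNReal} {T : ℝ}
    (hF : AntilipschitzWith K F) (hF_cont : Continuous F) (hF_add : ∀ x, F (x + T) = F x + T)
    (he : Function.RightInverse e F) {h : ℝ → E} (hh : Continuous h)
    (hh_per : Function.Periodic h T) :
    ∫ x in a..a + T, h (F x) = ∫ y in a..a + T, deriv e y • h y := by
  have he_lip : LipschitzWith K e := hF.to_rightInverse he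
  have he_add : e (a + T) = e a + T := hF.injective (by rw [he, hF_add, he])
  have hhF_per : Function.Periodic (h ∘ F) T := fun x => by
    simp only [Function.comp_apply, hF_add, hh_per (F x)]
  calc ∫ x in a..a + T, (h ∘ F) x
      = ∫ x in e a..e (a + T), (h ∘ F) x := by
        rw [he_add, hhF_per.intervalIntegral_add_eq a (e a)]
    _ = ∫ y in a..a + T, deriv e y • (h ∘ F) (e y) :=
        (integral_deriv_smul_comp_of_absolutelyContinuousOnInterval
          he_lip.lipschitzOnWith.absolutelyContinuousOnInterval (hh.comp hF_cont)).symm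
    _ = ∫ y in a..a + T, deriv e y • h y := by simp only [Function.comp_apply, he _]

end ChangeOfVariables

/-- The interpolation `γ_t = t γ + (1 - t) id` between the identity (`t = 0`) and `γ` (`t = 1`),
whose inverse `η_t` is the substitution made in the integral. -/
def interpolateId (γ : ℝ → ℝ) (t θ : ℝ) : ℝ :=
  t * γ θ + (1 - t) * θ

section InterpolateId

variable {γ : ℝ → ℝ} {t : ℝ}

theorem interpolateId_add {T : ℝ} (hγ : ∀ θ, γ (θ + T) = γ θ + T) (θ : ℝ) :
    interpolateId γ t (θ + T) = interpolateId γ t θ + T := by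
  simp only [interpolateId, hγ]
  ring

theorem strictMono_interpolateId (hγ : Monotone γ) (ht : t ∈ Set.Ico 0 1) :
    StrictMono (interpolateId γ t) :=
  (hγ.const_mul ht.1).add_strictMono (strictMono_id.const_mul (sub_pos.2 ht.2))

theorem antilipschitzWith_interpolateId (hγ : Monotone γ) (ht : t ∈ Set.Ico 0 1) :
    AntilipschitzWith (1 - t)⁻¹.toNNReal (interpolateId γ t) := by
  have h1t : 0 < 1 - t := sub_pos.2 ht.2
  refine AntilipschitzWith.of_le_mul_dist fun x y => ?_
  rw [Real.coe_toNNReal _ (inv_nonneg.2 h1t.le), inv_mul_eq_div, le_div_iff₀' h1t]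
  wlog hxy : x ≤ y generalizing x y
  · simpa only [dist_comm] using this y x (le_of_not_ge hxy)
  rw [dist_comm x, dist_comm (interpolateId γ t x), Real.dist_eq, Real.dist_eq,
    abs_of_nonneg (sub_nonneg.2 hxy)]
  calc (1 - t) * (y - x) ≤ t * (γ y - γ x) + (1 - t) * (y - x) :=
        le_add_of_nonneg_left (mul_nonneg ht.1 (sub_nonneg.2 (hγ hxy)))
    _ = interpolateId γ t y - interpolateId γ t x := by simp only [interpolateId]; ring
    _ ≤ |interpolateId γ t y - interpolateId γ t x| := le_abs_self _

theorem exp_mul_exp_eq_exp_interpolateId {x y : ℝ} (htxy : t * (y - x) = y) (θ : ℝ) :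
    Complex.exp (-Complex.I * x * θ) * Complex.exp (Complex.I * y * γ θ) =
      Complex.exp (Complex.I * (y - x) * interpolateId γ t θ) := by
  have htxy' : (t : ℂ) * (y - x) = y := by exact_mod_cast htxy
  rw [← Complex.exp_add, interpolateId]
  push_cast
  congr 1
  linear_combination Complex.I * (θ - γ θ) * htxy'

end InterpolateId

theorem periodic_exp_I_mul_int_mul (k : ℤ) :
    Function.Periodic (fun φ : ℝ => Complex.exp (Complex.I * k * φ)) (2 * π) := fun φ =>
  Complex.exp_eq_exp_iff_exists_int.2 ⟨k, by push_cast; ring⟩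

theorem integral_exp_mul_exp_comp_eq_integral_exp_mul_deriv {γ e : ℝ → ℝ} {t : ℝ} {m n : ℤ}
    (hγ : Monotone γ) (hper : ∀ θ, γ (θ + 2 * π) = γ θ + 2 * π)
    (ht : t ∈ Set.Ico 0 1) (htmn : t * (n - m) = n)
    (he : Function.RightInverse e (interpolateId γ t)) :
    ∫ θ in (0 : ℝ)..(2 * π),
        Complex.exp (-Complex.I * m * θ) * Complex.exp (Complex.I * n * γ θ) =
      ∫ φ in (0 : ℝ)..(2 * π), Complex.exp (Complex.I * (n - m) * φ) * ((deriv e φ : ℝ) : ℂ) := by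
  have hcont : Continuous (interpolateId γ t) :=
    (strictMono_interpolateId hγ ht).monotone.continuous_of_surjective he.surjective
  have hphase (θ : ℝ) :
      Complex.exp (-Complex.I * m * θ) * Complex.exp (Complex.I * n * γ θ) =
        Complex.exp (Complex.I * (n - m : ℤ) * interpolateId γ t θ) := by
    exact_mod_cast exp_mul_exp_eq_exp_interpolateId (γ := γ) htmn θ
  have hsubst := integral_comp_eq_integral_deriv_smul_of_antilipschitzWith (a := 0)
    (antilipschitzWith_interpolateId hγ ht) hcont (interpolateId_add hper) he (by fun_prop)
    (periodic_exp_I_mul_int_mul (n - m))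
  simp only [hphase, mul_comm _ ((deriv e _ : ℝ) : ℂ)]
  simpa only [zero_add, Int.cast_sub, Complex.real_smul] using hsubst

theorem div_add_mem_Ioo {𝕜 : Type*} [Field 𝕜] [LinearOrder 𝕜] [IsStrictOrderedRing 𝕜] {a b : 𝕜}
    (ha : 0 < a) (hb : 0 < b) : a / (b + a) ∈ Set.Ioo 0 1 :=
  ⟨by positivity, (div_lt_one (by positivity)).2 (by linarith)⟩

theorem stmt_6_general (γ : ℝ → ℝ) (hmono : Monotone γ)
    (hper : ∀ θ : ℝ, γ (θ + 2 * π) = γ θ + 2 * π)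
    (η : ℝ → ℝ → ℝ)
    (hη : ∀ t ∈ Set.Ioo (0 : ℝ) 1, Function.RightInverse (η t) (interpolateId γ t)) :
    (∀ m n : ℤ, m < 0 → 0 < n →
      (1 / (2 * π) : ℂ) *
          ∫ θ in (0 : ℝ)..(2 * π),
            Complex.exp (-Complex.I * m * θ) * Complex.exp (Complex.I * n * γ θ)
        = (1 / (2 * π) : ℂ) *
          ∫ φ in (0 : ℝ)..(2 * π),
            Complex.exp (Complex.I * (|(m : ℝ)| + (n : ℝ)) * φ) *
              Complex.ofReal (deriv (η ((n : ℝ) / (|(m : ℝ)| + (n : ℝ)))) φ))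
    ∧ (∀ m n : ℤ, n < 0 → 0 < m →
      (1 / (2 * π) : ℂ) *
          ∫ θ in (0 : ℝ)..(2 * π),
            Complex.exp (-Complex.I * m * θ) * Complex.exp (Complex.I * n * γ θ)
        = (1 / (2 * π) : ℂ) *
          ∫ φ in (0 : ℝ)..(2 * π),
            Complex.exp (-Complex.I * ((m : ℝ) + |(n : ℝ)|) * φ) *
              Complex.ofReal (deriv (η (|(n : ℝ)| / ((m : ℝ) + |(n : ℝ)|))) φ)) := by
  constructor
  · intro m n hm hn
    have hm' : 0 < -(m : ℝ) := by exact_mod_cast neg_pos.2 hm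
    have hn' : 0 < (n : ℝ) := by exact_mod_cast hn
    have ht := div_add_mem_Ioo hn' hm'
    rw [abs_of_neg (neg_pos.1 hm'), integral_exp_mul_exp_comp_eq_integral_exp_mul_deriv hmono hper
      (Set.Ioo_subset_Ico_self ht) (by field_simp; ring) (hη _ ht)]
    push_cast
    ring_nf
  · intro m n hn hm
    have hm' : 0 < (m : ℝ) := by exact_mod_cast hm
    have hn' : 0 < -(n : ℝ) := by exact_mod_cast neg_pos.2 hn
    have ht := div_add_mem_Ioo hn' hm'
    rw [abs_of_neg (neg_pos.1 hn'), integral_exp_mul_exp_comp_eq_integral_exp_mul_deriv hmono hper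
      (Set.Ioo_subset_Ico_self ht) (by field_simp; ring) (hη _ ht)]
    push_cast
    ring_nf

/-- The change-of-variables identity in the proof of Lemma 5.1: for `m < 0 < n`,
with `t = n/(|m|+n)`, `(1/2π)∫₀^{2π} e^{-imθ}e^{inγ(θ)} dθ
= (1/2π)∫₀^{2π} e^{i(|m|+n)φ} η_t'(φ) dφ`; and symmetrically for `n < 0 < m`. -/
theorem stmt_6 (γ : ℝ → ℝ)
    (hC1 : ContDiff ℝ 1 γ) (hpos : ∀ θ : ℝ, 0 < deriv γ θ)
    (hper : ∀ θ : ℝ, γ (θ + 2 * π) = γ θ + 2 * π)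
    (η : ℝ → ℝ → ℝ)
    (hη : ∀ t ∈ Set.Icc (0 : ℝ) 1,
      Function.LeftInverse (η t) (fun θ => t * γ θ + (1 - t) * θ) ∧
      Function.RightInverse (η t) (fun θ => t * γ θ + (1 - t) * θ)) :
    (∀ m n : ℤ, m < 0 → 0 < n →
      (1 / (2 * π) : ℂ) *
          ∫ θ in (0 : ℝ)..(2 * π),
            Complex.exp (-Complex.I * m * θ) * Complex.exp (Complex.I * n * γ θ)
        = (1 / (2 * π) : ℂ) *
          ∫ φ in (0 : ℝ)..(2 * π),
            Complex.exp (Complex.I * (|(m : ℝ)| + (n : ℝ)) * φ) *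
              Complex.ofReal (deriv (η ((n : ℝ) / (|(m : ℝ)| + (n : ℝ)))) φ))
    ∧ (∀ m n : ℤ, n < 0 → 0 < m →
      (1 / (2 * π) : ℂ) *
          ∫ θ in (0 : ℝ)..(2 * π),
            Complex.exp (-Complex.I * m * θ) * Complex.exp (Complex.I * n * γ θ)
        = (1 / (2 * π) : ℂ) *
          ∫ φ in (0 : ℝ)..(2 * π),
            Complex.exp (-Complex.I * ((m : ℝ) + |(n : ℝ)|) * φ) *
              Complex.ofReal (deriv (η (|(n : ℝ)| / ((m : ℝ) + |(n : ℝ)|))) φ)) :=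
  stmt_6_general γ (strictMono_of_deriv_pos hpos).monotone hper η fun t ht =>
    (hη t (Set.Ioo_subset_Icc_self ht)).2
end

section
/- Let h : ℝ → ℝ be a smooth function with h(t) = 1 for t ≤ 1 and h(t) = 0 for t ≥ 2, and define g_n : ℝ → ℝ by g_n(θ) = (1+cos θ)·h(tan(θ/2)/n) for θ ∈ (−π, π). Then each g_n is infinitely differentiable on (−π, π), and there exists a constant M such that for all n ≥ 1, ∫_{−π}^{π} |g_n'''(θ)| dθ ≤ M, where g_n''' denotes the third derivative of g_n on (−π, π). -/
open scoped Real

/-!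
With `u = tan (θ / 2) / c` the half-angle identities `(1 + cos θ) u' = 1 / c` and `sin θ u' = u`
collapse the third derivative of `g = (1 + cos θ) h(u)` to
`sin θ h(u) - h'(u) / c + u' (c⁻² + u²) / 2 h'''(u)`:
the `h''` terms cancel. For `c ≥ 1` the first two terms are bounded by `sup |h| + sup |h'|`. In the
last one the factor `u'` is the Jacobian of the increasing bijection `u : (-π, π) → ℝ`, so its
`L¹` norm is at most `∫ (1 + t²) / 2 |h'''(t)| dt`, which does not depend on `c`.
-/

section

open Real Set MeasureTheory

section EventuallyConstant

theorem exists_norm_le_of_eq_const_of_le_of_ge {α E : Type*} [LinearOrder α] [TopologicalSpace α]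
    [CompactIccSpace α] [SeminormedAddGroup E] {f : α → E} {a b : α} {p q : E} (hf : Continuous f)
    (hleft : ∀ t ≤ a, f t = p) (hright : ∀ t, b ≤ t → f t = q) : ∃ C, ∀ t, ‖f t‖ ≤ C := by
  obtain ⟨C, hC⟩ := (isCompact_Icc (a := a) (b := b)).exists_bound_of_continuousOn hf.continuousOn
  refine ⟨max C (max ‖p‖ ‖q‖), fun t => ?_⟩
  rcases le_total t a with hta | hat
  · simp [hleft t hta]
  rcases le_total b t with hbt | htb
  · simp [hright t hbt]
  · exact le_max_of_le_left (hC t ⟨hat, htb⟩)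

variable {E : Type*} [NormedAddCommGroup E] [NormedSpace ℝ E] {f : ℝ → E} {a b : ℝ} {p q : E}

theorem hasCompactSupport_deriv_of_eq_const_of_le_of_ge
    (hleft : ∀ t ≤ a, f t = p) (hright : ∀ t, b ≤ t → f t = q) : HasCompactSupport (deriv f) := by
  refine HasCompactSupport.intro (isCompact_Icc (a := a) (b := b)) fun t ht => ?_
  rcases not_and_or.1 ht with hta | hbt
  · have hconst : f =ᶠ[nhds t] fun _ => p :=
      Filter.eventually_of_mem (Iio_mem_nhds (not_le.1 hta)) fun s hs => hleft s hs.le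
    rw [hconst.deriv_eq, deriv_const]
  · have hconst : f =ᶠ[nhds t] fun _ => q :=
      Filter.eventually_of_mem (Ioi_mem_nhds (not_le.1 hbt)) fun s hs => hright s hs.le
    rw [hconst.deriv_eq, deriv_const]

end EventuallyConstant

section iteratedDeriv

variable {𝕜 F : Type*} [NontriviallyNormedField 𝕜] [NormedAddCommGroup F] [NormedSpace 𝕜 F]
  {f : 𝕜 → F}

theorem hasCompactSupport_iteratedDeriv_succ (hf : HasCompactSupport (deriv f)) (m : ℕ) :
    HasCompactSupport (iteratedDeriv (m + 1) f) := by
  induction m with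
  | zero => rwa [zero_add, iteratedDeriv_one]
  | succ m ih => rw [iteratedDeriv_succ]; exact ih.deriv

theorem hasDerivAt_iteratedDeriv {m : ℕ} {r : WithTop ℕ∞} (hf : ContDiff 𝕜 r f) (hm : m < r)
    (x : 𝕜) : HasDerivAt (iteratedDeriv m f) (iteratedDeriv (m + 1) f x) x := by
  rw [iteratedDeriv_succ]
  exact (hf.differentiable_iteratedDeriv m hm x).hasDerivAt

end iteratedDeriv

/-- The substitution `u = tan (θ / 2) / c`: the stereographic coordinate on `(-π, π)`, rescaled so
that the cut-off at scale `c` becomes the cut-off at scale `1`. -/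
noncomputable def scaledTanHalf (c θ : ℝ) : ℝ := tan (θ / 2) / c

/-- The translation field `1 + cos θ` cut off by the profile `h` at height `c` of the stereographic
coordinate `tan (θ / 2)`; the paper's `g_n` is `cutoffField h n`. -/
noncomputable def cutoffField (h : ℝ → ℝ) (c θ : ℝ) : ℝ := (1 + cos θ) * h (scaledTanHalf c θ)

section scaledTanHalf

variable {c θ : ℝ}

theorem cos_half_pos_of_mem_Ioo (hθ : θ ∈ Ioo (-π) π) : 0 < cos (θ / 2) :=
  cos_pos_of_mem_Ioo ⟨by linarith [hθ.1], by linarith [hθ.2]⟩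

theorem contDiffAt_scaledTanHalf {r : WithTop ℕ∞} (hθ : θ ∈ Ioo (-π) π) :
    ContDiffAt ℝ r (scaledTanHalf c) θ :=
  ((contDiffAt_tan.2 (cos_half_pos_of_mem_Ioo hθ).ne').comp θ
    (contDiffAt_id.div_const 2)).div_const c

theorem hasDerivAt_scaledTanHalf (hθ : θ ∈ Ioo (-π) π) :
    HasDerivAt (scaledTanHalf c) (deriv (scaledTanHalf c) θ) θ :=
  ((contDiffAt_scaledTanHalf (r := 1) hθ).differentiableAt one_ne_zero).hasDerivAt

theorem deriv_scaledTanHalf (hθ : θ ∈ Ioo (-π) π) :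
    deriv (scaledTanHalf c) θ = (1 + tan (θ / 2) ^ 2) / (2 * c) := by
  have hcos := (cos_half_pos_of_mem_Ioo hθ).ne'
  have hderiv := ((hasDerivAt_tan hcos).comp θ ((hasDerivAt_id θ).div_const 2)).div_const c
  refine hderiv.deriv.trans ?_
  rw [← inv_one_add_tan_sq hcos]
  field_simp

theorem one_add_cos_mul_deriv_scaledTanHalf (hθ : θ ∈ Ioo (-π) π) :
    (1 + cos θ) * deriv (scaledTanHalf c) θ = c⁻¹ := by
  have hcos := (cos_half_pos_of_mem_Ioo hθ).ne'
  have hdouble : 1 + cos θ = 2 * cos (θ / 2) ^ 2 := by rw [cos_sq]; ring_nf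
  rw [deriv_scaledTanHalf hθ, hdouble, ← inv_one_add_tan_sq hcos]
  field_simp

theorem sin_mul_deriv_scaledTanHalf (hθ : θ ∈ Ioo (-π) π) :
    sin θ * deriv (scaledTanHalf c) θ = scaledTanHalf c θ := by
  rw [deriv_scaledTanHalf hθ, sin_eq_two_mul_tan_half_div_one_add_tan_half_sq, scaledTanHalf]
  field_simp

theorem deriv_scaledTanHalf_div (hθ : θ ∈ Ioo (-π) π) :
    deriv (scaledTanHalf c) θ / c = (c⁻¹ ^ 2 + scaledTanHalf c θ ^ 2) / 2 := by
  rw [deriv_scaledTanHalf hθ, scaledTanHalf]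
  ring

theorem deriv_scaledTanHalf_nonneg (hc : 0 ≤ c) (hθ : θ ∈ Ioo (-π) π) :
    0 ≤ deriv (scaledTanHalf c) θ := by
  rw [deriv_scaledTanHalf hθ]
  positivity

theorem monotoneOn_scaledTanHalf (hc : 0 ≤ c) : MonotoneOn (scaledTanHalf c) (Ioo (-π) π) := by
  intro x hx y hy hxy
  refine div_le_div_of_nonneg_right (strictMonoOn_tan.monotoneOn ?_ ?_ ?_) hc
  · constructor <;> linarith [hx.1, hx.2]
  · constructor <;> linarith [hy.1, hy.2]
  · linarith

theorem image_scaledTanHalf (hc : c ≠ 0) : scaledTanHalf c '' Ioo (-π) π = univ := by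
  refine eq_univ_of_forall fun t => ⟨2 * arctan (c * t), ?_, ?_⟩
  · constructor <;> linarith [neg_pi_div_two_lt_arctan (c * t), arctan_lt_pi_div_two (c * t)]
  · rw [scaledTanHalf, mul_div_cancel_left₀ _ two_ne_zero, tan_arctan, mul_div_cancel_left₀ _ hc]

section ChangeOfVariables

variable {E : Type*} [NormedAddCommGroup E] [NormedSpace ℝ E]

theorem integrableOn_deriv_smul_comp_scaledTanHalf_iff (hc : 0 < c) (φ : ℝ → E) :
    IntegrableOn (fun θ => deriv (scaledTanHalf c) θ • φ (scaledTanHalf c θ)) (Ioo (-π) π) ↔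
      Integrable φ := by
  rw [← integrableOn_image_iff_integrableOn_deriv_smul_of_monotoneOn measurableSet_Ioo
    (fun θ hθ => (hasDerivAt_scaledTanHalf hθ).hasDerivWithinAt) (monotoneOn_scaledTanHalf hc.le),
    image_scaledTanHalf hc.ne', integrableOn_univ]

theorem integral_deriv_smul_comp_scaledTanHalf (hc : 0 < c) (φ : ℝ → E) :
    ∫ θ in Ioo (-π) π, deriv (scaledTanHalf c) θ • φ (scaledTanHalf c θ) = ∫ t, φ t := by
  rw [← integral_image_eq_integral_deriv_smul_of_monotoneOn measurableSet_Ioo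
    (fun θ hθ => (hasDerivAt_scaledTanHalf hθ).hasDerivWithinAt) (monotoneOn_scaledTanHalf hc.le),
    image_scaledTanHalf hc.ne', setIntegral_univ]

theorem integrableOn_const_add_deriv_smul_comp_scaledTanHalf (hc : 0 < c) (C : E) {φ : ℝ → E}
    (hφ : Integrable φ) :
    IntegrableOn (fun θ => C + deriv (scaledTanHalf c) θ • φ (scaledTanHalf c θ)) (Ioo (-π) π) :=
  (integrableOn_const measure_Ioo_lt_top.ne).add
    ((integrableOn_deriv_smul_comp_scaledTanHalf_iff hc φ).2 hφ)

theorem integral_const_add_deriv_smul_comp_scaledTanHalf [CompleteSpace E] (hc : 0 < c) (C : E)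
    {φ : ℝ → E} (hφ : Integrable φ) :
    ∫ θ in Ioo (-π) π, (C + deriv (scaledTanHalf c) θ • φ (scaledTanHalf c θ)) =
      (2 * π) • C + ∫ t, φ t := by
  have hconst : IntegrableOn (fun _ : ℝ => C) (Ioo (-π) π) :=
    integrableOn_const measure_Ioo_lt_top.ne
  rw [integral_add hconst ((integrableOn_deriv_smul_comp_scaledTanHalf_iff hc φ).2 hφ),
    integral_deriv_smul_comp_scaledTanHalf hc, setIntegral_const,
    volume_real_Ioo_of_le (by linarith [pi_pos]), sub_neg_eq_add, two_mul]

end ChangeOfVariables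

end scaledTanHalf

section cutoffField

variable {h : ℝ → ℝ} {c θ C₀ C₁ : ℝ} {r : WithTop ℕ∞}

theorem contDiffOn_cutoffField (hh : ContDiff ℝ r h) (c : ℝ) :
    ContDiffOn ℝ r (cutoffField h c) (Ioo (-π) π) := fun _ hθ =>
  ((contDiffAt_const.add contDiff_cos.contDiffAt).mul
    (hh.contDiffAt.comp _ (contDiffAt_scaledTanHalf hθ))).contDiffWithinAt

theorem eqOn_deriv_cutoffField (hh : Differentiable ℝ h) (c : ℝ) :
    EqOn (deriv (cutoffField h c))
      (fun θ => -sin θ * h (scaledTanHalf c θ) + c⁻¹ * deriv h (scaledTanHalf c θ))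
      (Ioo (-π) π) := by
  intro θ hθ
  have hderiv := ((hasDerivAt_cos θ).const_add 1).mul
    ((hh _).hasDerivAt.comp θ (hasDerivAt_scaledTanHalf (c := c) hθ))
  refine hderiv.deriv.trans ?_
  simp only [Function.comp]
  linear_combination deriv h (scaledTanHalf c θ) * one_add_cos_mul_deriv_scaledTanHalf (c := c) hθ

theorem eqOn_iteratedDeriv_two_cutoffField (hh : ContDiff ℝ 2 h) (c : ℝ) :
    EqOn (iteratedDeriv 2 (cutoffField h c))
      (fun θ => -cos θ * h (scaledTanHalf c θ) - scaledTanHalf c θ * deriv h (scaledTanHalf c θ)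
        + (c⁻¹ ^ 2 + scaledTanHalf c θ ^ 2) / 2 * iteratedDeriv 2 h (scaledTanHalf c θ))
      (Ioo (-π) π) := by
  intro θ hθ
  have hh₀ := hh.differentiable two_ne_zero
  have hh₁ := hasDerivAt_iteratedDeriv (m := 1) hh (by norm_num)
  rw [iteratedDeriv_one] at hh₁
  have hu := hasDerivAt_scaledTanHalf (c := c) hθ
  have hderiv := ((hasDerivAt_sin θ).neg.mul ((hh₀ _).hasDerivAt.comp θ hu)).add
    (((hh₁ _).comp θ hu).const_mul c⁻¹)
  rw [iteratedDeriv_succ, iteratedDeriv_one, (eqOn_deriv_cutoffField hh₀ c).deriv isOpen_Ioo hθ]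
  refine hderiv.deriv.trans ?_
  simp only [Function.comp, Pi.neg_apply]
  linear_combination -deriv h (scaledTanHalf c θ) * sin_mul_deriv_scaledTanHalf (c := c) hθ
    + iteratedDeriv 2 h (scaledTanHalf c θ) * deriv_scaledTanHalf_div (c := c) hθ

theorem eqOn_iteratedDeriv_three_cutoffField (hh : ContDiff ℝ 3 h) (c : ℝ) :
    EqOn (iteratedDeriv 3 (cutoffField h c))
      (fun θ => sin θ * h (scaledTanHalf c θ) - c⁻¹ * deriv h (scaledTanHalf c θ)
        + deriv (scaledTanHalf c) θ * ((c⁻¹ ^ 2 + scaledTanHalf c θ ^ 2) / 2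
          * iteratedDeriv 3 h (scaledTanHalf c θ)))
      (Ioo (-π) π) := by
  intro θ hθ
  have hh₀ := hh.differentiable three_ne_zero
  have hh₁ := hasDerivAt_iteratedDeriv (m := 1) hh (by norm_num)
  have hh₂ := hasDerivAt_iteratedDeriv (m := 2) hh (by norm_num)
  rw [iteratedDeriv_one] at hh₁
  have hu := hasDerivAt_scaledTanHalf (c := c) hθ
  have hderiv := (((hasDerivAt_cos θ).neg.mul ((hh₀ _).hasDerivAt.comp θ hu)).sub
    (hu.mul ((hh₁ _).comp θ hu))).add
    ((((hu.pow 2).const_add (c⁻¹ ^ 2)).div_const 2).mul ((hh₂ _).comp θ hu))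
  rw [iteratedDeriv_succ,
    (eqOn_iteratedDeriv_two_cutoffField (hh.of_le (by norm_num)) c).deriv isOpen_Ioo hθ]
  refine hderiv.deriv.trans ?_
  simp only [Function.comp, Pi.neg_apply, Pi.pow_apply]
  push_cast
  linear_combination
    -deriv h (scaledTanHalf c θ) * one_add_cos_mul_deriv_scaledTanHalf (c := c) hθ

theorem abs_iteratedDeriv_three_cutoffField_le (hh : ContDiff ℝ 3 h) (hC₀ : ∀ t, |h t| ≤ C₀)
    (hC₁ : ∀ t, |deriv h t| ≤ C₁) (hc : 1 ≤ c) (hθ : θ ∈ Ioo (-π) π) :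
    |iteratedDeriv 3 (cutoffField h c) θ| ≤ C₀ + C₁ + deriv (scaledTanHalf c) θ *
      (|(1 + scaledTanHalf c θ ^ 2) * iteratedDeriv 3 h (scaledTanHalf c θ)| / 2) := by
  have hc₀ : 0 ≤ c := zero_le_one.trans hc
  have hc_inv : c⁻¹ ≤ 1 := inv_le_one_of_one_le₀ hc
  have hu' := deriv_scaledTanHalf_nonneg hc₀ hθ
  rw [eqOn_iteratedDeriv_three_cutoffField hh c hθ]
  set u := scaledTanHalf c θ
  have hsin : |sin θ * h u| ≤ C₀ := by
    rw [abs_mul]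
    exact (mul_le_of_le_one_left (abs_nonneg _) (abs_sin_le_one θ)).trans (hC₀ u)
  have hderiv : |c⁻¹ * deriv h u| ≤ C₁ := by
    rw [abs_mul, abs_of_nonneg (inv_nonneg.2 hc₀)]
    exact (mul_le_of_le_one_left (abs_nonneg _) hc_inv).trans (hC₁ u)
  have hweight : |(c⁻¹ ^ 2 + u ^ 2) / 2| ≤ |1 + u ^ 2| / 2 := by
    rw [abs_of_nonneg (by positivity), abs_of_nonneg (by positivity)]
    gcongr
    exact pow_le_one₀ (inv_nonneg.2 hc₀) hc_inv
  have hthird : |deriv (scaledTanHalf c) θ * ((c⁻¹ ^ 2 + u ^ 2) / 2 * iteratedDeriv 3 h u)| ≤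
      deriv (scaledTanHalf c) θ * (|(1 + u ^ 2) * iteratedDeriv 3 h u| / 2) := by
    rw [abs_mul, abs_mul, abs_mul, abs_of_nonneg hu', mul_div_right_comm]
    gcongr
  exact (abs_add_le _ _).trans (add_le_add ((abs_sub _ _).trans (add_le_add hsin hderiv)) hthird)

theorem integrableOn_iteratedDeriv_three_cutoffField (hh : ContDiff ℝ 3 h)
    (hC₀ : ∀ t, |h t| ≤ C₀) (hC₁ : ∀ t, |deriv h t| ≤ C₁)
    (hint : Integrable fun t => (1 + t ^ 2) * iteratedDeriv 3 h t) (hc : 1 ≤ c) :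
    IntegrableOn (iteratedDeriv 3 (cutoffField h c)) (Ioo (-π) π) := by
  refine (integrableOn_const_add_deriv_smul_comp_scaledTanHalf (zero_lt_one.trans_le hc) (C₀ + C₁)
    (hint.abs.div_const 2)).mono' ?_ (ae_restrict_of_forall_mem measurableSet_Ioo fun θ hθ =>
      abs_iteratedDeriv_three_cutoffField_le hh hC₀ hC₁ hc hθ)
  rw [iteratedDeriv_succ]
  exact (measurable_deriv _).aestronglyMeasurable

theorem integral_abs_iteratedDeriv_three_cutoffField_le (hh : ContDiff ℝ 3 h)
    (hC₀ : ∀ t, |h t| ≤ C₀) (hC₁ : ∀ t, |deriv h t| ≤ C₁)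
    (hint : Integrable fun t => (1 + t ^ 2) * iteratedDeriv 3 h t) (hc : 1 ≤ c) :
    ∫ θ in Ioo (-π) π, |iteratedDeriv 3 (cutoffField h c) θ| ≤
      2 * π * (C₀ + C₁) + ∫ t, |(1 + t ^ 2) * iteratedDeriv 3 h t| / 2 := by
  have hc₀ : 0 < c := zero_lt_one.trans_le hc
  have hweight_int := hint.abs.div_const 2
  rw [← smul_eq_mul (2 * π),
    ← integral_const_add_deriv_smul_comp_scaledTanHalf hc₀ (C₀ + C₁) hweight_int]
  exact setIntegral_mono_on (integrableOn_iteratedDeriv_three_cutoffField hh hC₀ hC₁ hint hc).abs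
    (integrableOn_const_add_deriv_smul_comp_scaledTanHalf hc₀ (C₀ + C₁) hweight_int)
    measurableSet_Ioo fun θ hθ => abs_iteratedDeriv_three_cutoffField_le hh hC₀ hC₁ hc hθ

end cutoffField

end

theorem stmt_9_general {h : ℝ → ℝ} {r : WithTop ℕ∞} (hr : 3 ≤ r) (hsm : ContDiff ℝ r h)
    (hbdd : ∃ C, ∀ t, |h t| ≤ C) (hbdd' : ∃ C, ∀ t, |deriv h t| ≤ C)
    (hint : MeasureTheory.Integrable fun t => (1 + t ^ 2) * iteratedDeriv 3 h t) :
    (∀ c : ℝ, c ≠ 0 →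
      ContDiffOn ℝ r (fun θ : ℝ => (1 + Real.cos θ) * h (Real.tan (θ / 2) / c))
        (Set.Ioo (-π) π))
    ∧ ∃ M : ℝ, ∀ c : ℝ, 1 ≤ c →
        IntervalIntegrable
          (iteratedDeriv 3 (fun θ : ℝ => (1 + Real.cos θ) * h (Real.tan (θ / 2) / c)))
          MeasureTheory.volume (-π) π
        ∧ (∫ θ in (-π)..π,
          |iteratedDeriv 3 (fun θ : ℝ => (1 + Real.cos θ) * h (Real.tan (θ / 2) / c)) θ|)
          ≤ M := by
  obtain ⟨C₀, hC₀⟩ := hbdd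
  obtain ⟨C₁, hC₁⟩ := hbdd'
  have hh := hsm.of_le hr
  have hπ : -π ≤ π := by linarith [Real.pi_pos]
  refine ⟨fun c _ => contDiffOn_cutoffField hsm c,
    2 * π * (C₀ + C₁) + ∫ t, |(1 + t ^ 2) * iteratedDeriv 3 h t| / 2, fun c hc => ?_⟩
  rw [intervalIntegrable_iff_integrableOn_Ioo_of_le hπ, intervalIntegral.integral_of_le hπ,
    MeasureTheory.integral_Ioc_eq_integral_Ioo]
  exact ⟨integrableOn_iteratedDeriv_three_cutoffField hh hC₀ hC₁ hint hc,
    integral_abs_iteratedDeriv_three_cutoffField_le hh hC₀ hC₁ hint hc⟩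

/-- Each cut-off field `g_n(θ) = (1+cos θ)·h(tan(θ/2)/n)` is smooth on `(-π,π)`, and
the `L¹((-π,π))` norms of the third derivatives are uniformly bounded in `n`. -/
theorem stmt_9 (h : ℝ → ℝ) (hsm : ContDiff ℝ (⊤ : ℕ∞) h)
    (h1 : ∀ t : ℝ, t ≤ 1 → h t = 1) (h2 : ∀ t : ℝ, 2 ≤ t → h t = 0) :
    (∀ n : ℕ, 1 ≤ n →
      ContDiffOn ℝ (⊤ : ℕ∞) (fun θ : ℝ => (1 + Real.cos θ) * h (Real.tan (θ / 2) / n))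
        (Set.Ioo (-π) π))
    ∧ ∃ M : ℝ, ∀ n : ℕ, 1 ≤ n →
        (∫ θ in (-π)..π,
          |iteratedDeriv 3 (fun θ : ℝ => (1 + Real.cos θ) * h (Real.tan (θ / 2) / n)) θ|)
          ≤ M := by
  have hthree : (3 : WithTop ℕ∞) ≤ (⊤ : ℕ∞) := WithTop.coe_le_coe.2 le_top
  have hsupp : HasCompactSupport (deriv h) :=
    hasCompactSupport_deriv_of_eq_const_of_le_of_ge h1 h2
  have hbdd' := (hsm.continuous_deriv (by simp)).bounded_above_of_compact_support hsupp
  have hcont₃ : Continuous fun t => (1 + t ^ 2) * iteratedDeriv 3 h t :=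
    (by fun_prop : Continuous fun t : ℝ => 1 + t ^ 2).mul (hsm.continuous_iteratedDeriv 3 hthree)
  obtain ⟨hsmooth, M, hM⟩ := stmt_9_general hthree hsm
    (exists_norm_le_of_eq_const_of_le_of_ge hsm.continuous h1 h2) hbdd'
    (hcont₃.integrable_of_hasCompactSupport (hasCompactSupport_iteratedDeriv_succ hsupp 2).mul_left)
  exact ⟨fun n hn => hsmooth n (by positivity), M, fun n hn => (hM n (by exact_mod_cast hn)).2⟩
end

section
/- Let n ≥ 0 and let f₁, f₂ : ℝ → ℝ be smooth 2π-periodic functions with f₁(π) = f₂(π) = 0, f₁'(π) = f₂'(π) = 0, and f₁^{(k)}(π) = f₂^{(k)}(π) for all 0 ≤ k ≤ n. Suppose φ₁, φ₂ : ℝ × ℝ → ℝ are smooth maps satisfying ∂_t φ_j(t,θ) = f_j(φ_j(t,θ)) and φ_j(0,θ) = θ for all t, θ (j = 1,2). Then φ₁(t,π) = φ₂(t,π) = π for all t, and for every t ∈ ℝ and every 0 ≤ k ≤ n, ∂_θ^k φ₁(t,θ)|_{θ=π} = ∂_θ^k φ₂(t,θ)|_{θ=π}. -/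
open scoped Real

/-!
Two smooth functions have the same derivatives up to order `n` at `a` exactly when they differ by
`o((x - a) ^ n)`, so the claim is about the size of `φ₁ t x - φ₂ t x` near `a`. As the fields are
`O(x - a)`, trajectories starting near the fixed point `a` satisfy `φ t x - a = O(x - a)`
uniformly on compact time intervals. Hence along the flow `φ₂` the fields differ by
`o((x - a) ^ n)`, that is, `φ₂` solves the equation of `φ₁` up to an error `o((x - a) ^ n)`, and
Grönwall's inequality gives `φ₁ t x - φ₂ t x = o((x - a) ^ n)`. Negative times follow by reversing
time.
-/

open Asymptotics Filter Function Metric Set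
open scoped Topology NNReal

section Jets

variable {F : Type*} [NormedAddCommGroup F] [NormedSpace ℝ F] {g g₁ g₂ : ℝ → F} {a : ℝ} {n : ℕ}

theorem eq_zero_of_pow_smul_isLittleO_pow {c : F}
    (h : (fun x : ℝ ↦ (x - a) ^ n • c) =o[𝓝 a] fun x ↦ (x - a) ^ n) : c = 0 := by
  by_contra hc
  have hmul : (fun x : ℝ ↦ ‖c‖ * ‖(x - a) ^ n‖) =o[𝓝[≠] a] fun x ↦ ‖(x - a) ^ n‖ := by
    simpa only [norm_smul, mul_comm] using (h.mono nhdsWithin_le_nhds).norm_norm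
  have hself := (isLittleO_const_mul_left_iff (norm_ne_zero_iff.2 hc)).1 hmul
  refine isLittleO_irrefl (Eventually.frequently ?_) hself
  filter_upwards [self_mem_nhdsWithin] with x hx
  exact norm_ne_zero_iff.2 (pow_ne_zero n (sub_ne_zero.2 hx))

theorem taylorWithinEval_univ_eq_zero (h : ∀ k ≤ n, iteratedDeriv k g a = 0) (x : ℝ) :
    taylorWithinEval g n univ a x = 0 := by
  rw [taylor_within_apply]
  refine Finset.sum_eq_zero fun k hk ↦ ?_
  rw [iteratedDerivWithin_univ, h k (Finset.mem_range_succ_iff.1 hk), smul_zero]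

theorem iteratedDeriv_eq_zero_of_isLittleO_pow (hg : ContDiff ℝ n g)
    (h : g =o[𝓝 a] fun x ↦ (x - a) ^ n) : ∀ k ≤ n, iteratedDeriv k g a = 0 := by
  induction n with
  | zero =>
    have hlim : Tendsto g (𝓝 a) (𝓝 0) := (isLittleO_one_iff ℝ).1 (by simpa only [pow_zero] using h)
    have hga : g a = 0 := tendsto_nhds_unique (hg.continuous.tendsto a) hlim
    simpa using hga
  | succ n ih =>
    have hpow : (fun x : ℝ ↦ (x - a) ^ (n + 1)) =o[𝓝 a] fun x ↦ (x - a) ^ n := by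
      simpa only [← norm_pow, isLittleO_norm_norm] using
        isLittleO_pow_sub_pow_sub a n.lt_succ_self
    have hlower : ∀ k ≤ n, iteratedDeriv k g a = 0 :=
      ih (hg.of_le (by exact_mod_cast n.le_succ)) (h.trans hpow)
    have htaylor : (fun x ↦ taylorWithinEval g (n + 1) univ a x) =o[𝓝 a]
        fun x ↦ (x - a) ^ (n + 1) := by
      simpa only [sub_sub_cancel] using h.sub (taylor_isLittleO_univ hg)
    have htop : ((n + 1 : ℝ) * n.factorial)⁻¹ • iteratedDeriv (n + 1) g a = 0 := by
      refine eq_zero_of_pow_smul_isLittleO_pow (a := a) (n := n + 1) (htaylor.congr_left fun x ↦ ?_)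
      rw [taylorWithinEval_succ, taylorWithinEval_univ_eq_zero hlower, zero_add,
        iteratedDerivWithin_univ, smul_smul, mul_comm]
    intro k hk
    rcases Nat.le_succ_iff.1 hk with hk | rfl
    · exact hlower k hk
    · exact (smul_eq_zero.1 htop).resolve_left (by positivity)

theorem isLittleO_pow_iff_iteratedDeriv_eq_zero (hg : ContDiff ℝ n g) :
    (g =o[𝓝 a] fun x ↦ (x - a) ^ n) ↔ ∀ k ≤ n, iteratedDeriv k g a = 0 := by
  refine ⟨iteratedDeriv_eq_zero_of_isLittleO_pow hg, fun h ↦ ?_⟩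
  simpa only [taylorWithinEval_univ_eq_zero h, sub_zero] using taylor_isLittleO_univ (x₀ := a) hg

theorem sub_isLittleO_pow_iff_iteratedDeriv_eq (hg₁ : ContDiff ℝ n g₁) (hg₂ : ContDiff ℝ n g₂) :
    ((g₁ - g₂) =o[𝓝 a] fun x ↦ (x - a) ^ n) ↔
      ∀ k ≤ n, iteratedDeriv k g₁ a = iteratedDeriv k g₂ a := by
  rw [isLittleO_pow_iff_iteratedDeriv_eq_zero (g := g₁ - g₂) (hg₁.sub hg₂)]
  refine forall₂_congr fun k hk ↦ ?_
  have hkn : (k : WithTop ℕ∞) ≤ n := by exact_mod_cast hk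
  rw [iteratedDeriv_sub (hg₁.of_le hkn).contDiffAt (hg₂.of_le hkn).contDiffAt, sub_eq_zero]

end Jets

section Flow

variable {E : Type*} [NormedAddCommGroup E] [NormedSpace ℝ E] {f f₁ f₂ : E → E} {a : E}

theorem gronwallBound_zero_eq_mul (K ε t : ℝ) :
    gronwallBound 0 K ε t = ε * gronwallBound 0 K 1 t := by
  unfold gronwallBound
  split_ifs <;> ring

theorem norm_sub_le_mul_gronwallBound {γ₁ γ₂ : ℝ → E} (hγ₁ : IsIntegralCurve γ₁ fun _ ↦ f₁)
    (hγ₂ : IsIntegralCurve γ₂ fun _ ↦ f₂) (hinit : γ₁ 0 = γ₂ 0) {K : ℝ≥0} {s : Set E}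
    (hlip : LipschitzOnWith K f₁ s) {t η : ℝ} (ht : 0 ≤ t) (hmem₁ : ∀ τ ∈ Icc 0 t, γ₁ τ ∈ s)
    (hmem₂ : ∀ τ ∈ Icc 0 t, γ₂ τ ∈ s) (hη : ∀ τ ∈ Icc 0 t, ‖(f₁ - f₂) (γ₂ τ)‖ ≤ η) :
    ‖γ₁ t - γ₂ t‖ ≤ η * gronwallBound 0 K 1 t := by
  have hγ₂_approx : ∀ τ ∈ Ico 0 t, dist (f₂ (γ₂ τ)) (f₁ (γ₂ τ)) ≤ η := fun τ hτ ↦ by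
    simpa only [dist_comm, dist_eq_norm, Pi.sub_apply] using hη τ (Ico_subset_Icc_self hτ)
  have hgronwall := dist_le_of_approx_trajectories_ODE_of_mem (v := fun _ ↦ f₁) (s := fun _ ↦ s)
    (δ := 0) (fun _ _ ↦ hlip)
    hγ₁.continuous.continuousOn (fun τ _ ↦ (hγ₁ τ).hasDerivWithinAt) (fun _ _ ↦ (dist_self _).le)
    (fun τ hτ ↦ hmem₁ τ (Ico_subset_Icc_self hτ))
    hγ₂.continuous.continuousOn (fun τ _ ↦ (hγ₂ τ).hasDerivWithinAt) hγ₂_approx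
    (fun τ hτ ↦ hmem₂ τ (Ico_subset_Icc_self hτ))
    (by rw [hinit, dist_self]) t ⟨ht, le_rfl⟩
  rwa [zero_add, sub_zero, dist_eq_norm, gronwallBound_zero_eq_mul] at hgronwall

/- A trajectory that first reaches the barrier `δ * exp ((L + 1) * t)` does so inside the ball,
where its speed is less than the slope of the barrier. -/
theorem norm_sub_le_mul_exp_of_isIntegralCurve_of_le {γ : ℝ → E} (hγ : IsIntegralCurve γ fun _ ↦ f)
    {L r δ T : ℝ} (hL : 0 ≤ L) (hf : ∀ x ∈ closedBall a r, ‖f x‖ ≤ L * ‖x - a‖) (hδ : 0 < δ)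
    (hδr : δ * Real.exp ((L + 1) * T) ≤ r) (hγδ : ‖γ 0 - a‖ ≤ δ) {t : ℝ} (ht : t ∈ Icc 0 T) :
    ‖γ t - a‖ ≤ δ * Real.exp ((L + 1) * t) := by
  have hbarrier (s : ℝ) : HasDerivAt (fun s ↦ δ * Real.exp ((L + 1) * s))
      (δ * (Real.exp ((L + 1) * s) * (L + 1))) s := by
    simpa using (((hasDerivAt_id s).const_mul (L + 1)).exp).const_mul δ
  refine image_norm_le_of_norm_deriv_right_lt_deriv_boundary
    (f := fun s ↦ γ s - a) (f' := fun s ↦ f (γ s))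
    (hγ.continuous.sub continuous_const).continuousOn
    (fun s _ ↦ ((hγ s).sub_const a).hasDerivWithinAt) (by simpa using hγδ) hbarrier
    (fun s hs htouch ↦ ?_) ht
  have hmem : γ s ∈ closedBall a r := by
    rw [mem_closedBall_iff_norm, htouch]
    refine le_trans ?_ hδr
    gcongr
    exact hs.2.le
  calc ‖f (γ s)‖ ≤ L * ‖γ s - a‖ := hf _ hmem
    _ = L * (δ * Real.exp ((L + 1) * s)) := by rw [htouch]
    _ < (L + 1) * (δ * Real.exp ((L + 1) * s)) := by gcongr; exact lt_add_one L
    _ = δ * (Real.exp ((L + 1) * s) * (L + 1)) := by ring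

theorem norm_sub_le_mul_exp_of_isIntegralCurve {γ : ℝ → E} (hγ : IsIntegralCurve γ fun _ ↦ f)
    {L r T : ℝ} (hL : 0 ≤ L) (hf : ∀ x ∈ closedBall a r, ‖f x‖ ≤ L * ‖x - a‖)
    (hr : ‖γ 0 - a‖ * Real.exp ((L + 1) * T) < r) {t : ℝ} (ht : t ∈ Icc 0 T) :
    ‖γ t - a‖ ≤ ‖γ 0 - a‖ * Real.exp ((L + 1) * t) := by
  have hlim (s : ℝ) : Tendsto (fun δ ↦ δ * Real.exp ((L + 1) * s)) (𝓝[>] ‖γ 0 - a‖)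
      (𝓝 (‖γ 0 - a‖ * Real.exp ((L + 1) * s))) :=
    (tendsto_id.mono_left nhdsWithin_le_nhds).mul_const _
  refine ge_of_tendsto (hlim t) ?_
  filter_upwards [self_mem_nhdsWithin, (hlim T).eventually_lt_const hr] with δ hδ hδr
  exact norm_sub_le_mul_exp_of_isIntegralCurve_of_le hγ hL hf ((norm_nonneg _).trans_lt hδ)
    hδr.le hδ.le ht

/-- `IsGlobalFlow φ f` says that `φ` is the flow of the autonomous vector field `f` for all times
and all starting points. Regularity in the starting point is not part of the notion. -/
structure IsGlobalFlow (φ : ℝ → E → E) (f : E → E) : Prop where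
  isIntegralCurve : ∀ x, IsIntegralCurve (φ · x) fun _ ↦ f
  map_zero : ∀ x, φ 0 x = x

namespace IsGlobalFlow

variable {φ φ₁ φ₂ : ℝ → E → E}

theorem reverse (hφ : IsGlobalFlow φ f) : IsGlobalFlow (fun t ↦ φ (-t)) (-f) where
  isIntegralCurve x t := by
    simpa [comp_def] using (hφ.isIntegralCurve x (-t)).scomp t (hasDerivAt_neg t)
  map_zero x := by rw [neg_zero, hφ.map_zero]

theorem sub_isBigO_sub (hφ : IsGlobalFlow φ f) (hf : f =O[𝓝 a] (· - a)) (T : ℝ) :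
    (fun p : E × ℝ ↦ φ p.2 p.1 - a) =O[𝓝 a ×ˢ 𝓟 (Icc 0 T)] fun p ↦ p.1 - a := by
  obtain ⟨L, hL, hfL⟩ := hf.exists_pos
  obtain ⟨r, hr, hball⟩ := nhds_basis_closedBall.eventually_iff.1 hfL.bound
  have hsmall : ∀ᶠ x in 𝓝 a, ‖x - a‖ * Real.exp ((L + 1) * T) < r := by
    refine ContinuousAt.eventually_lt (by fun_prop) continuousAt_const ?_
    simpa using hr
  refine IsBigO.of_bound (Real.exp ((L + 1) * T)) (eventually_prod_principal_iff.2 ?_)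
  filter_upwards [hsmall] with x hx t ht
  have hgrowth := norm_sub_le_mul_exp_of_isIntegralCurve (hφ.isIntegralCurve x) hL.le
    (fun y hy ↦ hball hy) (by simpa only [hφ.map_zero] using hx) ht
  simp only [hφ.map_zero] at hgrowth
  rw [mul_comm]
  refine hgrowth.trans ?_
  gcongr
  exact ht.2

theorem tendsto_nhds (hφ : IsGlobalFlow φ f) (hf : f =O[𝓝 a] (· - a)) (T : ℝ) :
    Tendsto (fun p : E × ℝ ↦ φ p.2 p.1) (𝓝 a ×ˢ 𝓟 (Icc 0 T)) (𝓝 a) := by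
  have hsub : Tendsto (fun p : E × ℝ ↦ p.1 - a) (𝓝 a ×ˢ 𝓟 (Icc 0 T)) (𝓝 0) :=
    tendsto_sub_nhds_zero_iff.2 tendsto_fst
  exact tendsto_sub_nhds_zero_iff.1 ((hφ.sub_isBigO_sub hf T).trans_tendsto hsub)

theorem map_eq_self_of_nonneg (hφ : IsGlobalFlow φ f) (hf : f =O[𝓝 a] (· - a)) {t : ℝ}
    (ht : 0 ≤ t) : φ t a = a := by
  obtain ⟨C, hC⟩ := (hφ.sub_isBigO_sub hf t).bound
  have hbound := (eventually_prod_principal_iff.1 hC).self_of_nhds t ⟨ht, le_rfl⟩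
  simpa [sub_eq_zero] using hbound

theorem map_eq_self (hφ : IsGlobalFlow φ f) (hf : f =O[𝓝 a] (· - a)) (t : ℝ) : φ t a = a := by
  rcases le_total 0 t with ht | ht
  · exact hφ.map_eq_self_of_nonneg hf ht
  · simpa using hφ.reverse.map_eq_self_of_nonneg hf.neg_left (neg_nonneg.2 ht)

theorem sub_isLittleO_of_nonneg (hφ₁ : IsGlobalFlow φ₁ f₁) (hφ₂ : IsGlobalFlow φ₂ f₂) {n : ℕ}
    {K : ℝ≥0} {s : Set E} (hs : s ∈ 𝓝 a) (hlip : LipschitzOnWith K f₁ s)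
    (hf₁ : f₁ =O[𝓝 a] (· - a)) (hf₂ : f₂ =O[𝓝 a] (· - a))
    (hsub : (f₁ - f₂) =o[𝓝 a] (‖· - a‖ ^ n)) {t : ℝ} (ht : 0 ≤ t) :
    (φ₁ t - φ₂ t) =o[𝓝 a] (‖· - a‖ ^ n) := by
  have hdefect : (fun p : E × ℝ ↦ (f₁ - f₂) (φ₂ p.2 p.1)) =o[𝓝 a ×ˢ 𝓟 (Icc 0 t)]
      fun p ↦ ‖p.1 - a‖ ^ n :=
    (hsub.comp_tendsto (hφ₂.tendsto_nhds hf₂ t)).trans_isBigO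
      ((hφ₂.sub_isBigO_sub hf₂ t).norm_norm.pow n)
  have hmem₁ := eventually_prod_principal_iff.1 ((hφ₁.tendsto_nhds hf₁ t).eventually_mem hs)
  have hmem₂ := eventually_prod_principal_iff.1 ((hφ₂.tendsto_nhds hf₂ t).eventually_mem hs)
  refine isLittleO_iff.2 fun ε hε ↦ ?_
  obtain ⟨c, hc, hcε⟩ := exists_pos_mul_lt hε (gronwallBound 0 K 1 t)
  filter_upwards [hmem₁, hmem₂, eventually_prod_principal_iff.1 (hdefect.bound hc)]
    with x hx₁ hx₂ hx
  have hgronwall := norm_sub_le_mul_gronwallBound (hφ₁.isIntegralCurve x) (hφ₂.isIntegralCurve x)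
    (by rw [hφ₁.map_zero, hφ₂.map_zero]) hlip ht hx₁ hx₂ hx
  calc ‖(φ₁ t - φ₂ t) x‖ ≤ c * ‖‖x - a‖ ^ n‖ * gronwallBound 0 K 1 t := hgronwall
    _ = gronwallBound 0 K 1 t * c * ‖‖x - a‖ ^ n‖ := by ring
    _ ≤ ε * ‖‖x - a‖ ^ n‖ := by gcongr

theorem sub_isLittleO (hφ₁ : IsGlobalFlow φ₁ f₁) (hφ₂ : IsGlobalFlow φ₂ f₂) {n : ℕ}
    {K : ℝ≥0} {s : Set E} (hs : s ∈ 𝓝 a) (hlip : LipschitzOnWith K f₁ s)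
    (hf₁ : f₁ =O[𝓝 a] (· - a)) (hf₂ : f₂ =O[𝓝 a] (· - a))
    (hsub : (f₁ - f₂) =o[𝓝 a] (‖· - a‖ ^ n)) (t : ℝ) :
    (φ₁ t - φ₂ t) =o[𝓝 a] (‖· - a‖ ^ n) := by
  rcases le_total 0 t with ht | ht
  · exact hφ₁.sub_isLittleO_of_nonneg hφ₂ hs hlip hf₁ hf₂ hsub ht
  · have hsub_neg : (-f₁ - -f₂) =o[𝓝 a] (‖· - a‖ ^ n) := by
      rw [neg_sub_neg, ← neg_sub]
      exact hsub.neg_left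
    simpa using hφ₁.reverse.sub_isLittleO_of_nonneg hφ₂.reverse hs hlip.neg
      hf₁.neg_left hf₂.neg_left hsub_neg (neg_nonneg.2 ht)

end IsGlobalFlow

end Flow

theorem contDiff_of_contDiff_uncurry {𝕜 E F G : Type*} [NontriviallyNormedField 𝕜]
    [NormedAddCommGroup E] [NormedSpace 𝕜 E] [NormedAddCommGroup F] [NormedSpace 𝕜 F]
    [NormedAddCommGroup G] [NormedSpace 𝕜 G] {φ : E → F → G} {m : WithTop ℕ∞}
    (hφ : ContDiff 𝕜 m (uncurry φ)) (x : E) : ContDiff 𝕜 m (φ x) :=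
  hφ.comp (contDiff_const.prodMk contDiff_id)

theorem stmt_12_general {n : ℕ} {a : ℝ} {f₁ f₂ : ℝ → ℝ} {φ₁ φ₂ : ℝ → ℝ → ℝ}
    (hf₁ : ContDiff ℝ (max 1 n) f₁) (hf₂ : ContDiff ℝ (max 1 n) f₂) (hv₁ : f₁ a = 0)
    (hjets : ∀ k ≤ n, iteratedDeriv k f₁ a = iteratedDeriv k f₂ a)
    (hφ₁ : IsGlobalFlow φ₁ f₁) (hφ₂ : IsGlobalFlow φ₂ f₂)
    (hφ₁sm : ∀ t, ContDiff ℝ n (φ₁ t)) (hφ₂sm : ∀ t, ContDiff ℝ n (φ₂ t)) :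
    (∀ t, φ₁ t a = a ∧ φ₂ t a = a) ∧
      ∀ t, ∀ k ≤ n, iteratedDeriv k (φ₁ t) a = iteratedDeriv k (φ₂ t) a := by
  have hv₂ : f₂ a = 0 := by simpa [hv₁] using (hjets 0 n.zero_le).symm
  have hbigO {f : ℝ → ℝ} (hf : ContDiff ℝ (max 1 n) f) (hv : f a = 0) : f =O[𝓝 a] (· - a) := by
    have hdiff := (hf.of_le (le_max_left 1 _)).differentiable one_ne_zero
    simpa only [hv, sub_zero] using (hdiff a).isBigO_sub
  obtain ⟨K, s, hs, hlip⟩ := (hf₁.of_le (le_max_left 1 _)).contDiffAt (x := a)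
    |>.exists_lipschitzOnWith
  have hsub : (f₁ - f₂) =o[𝓝 a] (‖· - a‖ ^ n) := by
    simpa only [← norm_pow, isLittleO_norm_right] using (sub_isLittleO_pow_iff_iteratedDeriv_eq
      (hf₁.of_le (le_max_right 1 _)) (hf₂.of_le (le_max_right 1 _))).2 hjets
  refine ⟨fun t ↦ ⟨hφ₁.map_eq_self (hbigO hf₁ hv₁) t, hφ₂.map_eq_self (hbigO hf₂ hv₂) t⟩,
    fun t ↦ (sub_isLittleO_pow_iff_iteratedDeriv_eq (hφ₁sm t) (hφ₂sm t)).1 ?_⟩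
  simpa only [← norm_pow, isLittleO_norm_right] using
    hφ₁.sub_isLittleO hφ₂ hs hlip (hbigO hf₁ hv₁) (hbigO hf₂ hv₂) hsub t

/-- Lemma A.1 (first part): flows of two `2π`-periodic vector fields vanishing with their
first derivative at `π`, whose derivatives at `π` agree up to order `n`, fix `π` and have
equal `θ`-derivatives at `π` up to order `n`, for all times `t`. -/
theorem stmt_12 (n : ℕ) (f₁ f₂ : ℝ → ℝ)
    (hf₁ : ContDiff ℝ (⊤ : ℕ∞) f₁) (hf₂ : ContDiff ℝ (⊤ : ℕ∞) f₂)
    (hf₁per : ∀ θ : ℝ, f₁ (θ + 2 * π) = f₁ θ) (hf₂per : ∀ θ : ℝ, f₂ (θ + 2 * π) = f₂ θ)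
    (hv₁ : f₁ π = 0) (hv₂ : f₂ π = 0)
    (hd₁ : deriv f₁ π = 0) (hd₂ : deriv f₂ π = 0)
    (hjets : ∀ k : ℕ, k ≤ n → iteratedDeriv k f₁ π = iteratedDeriv k f₂ π)
    (φ₁ φ₂ : ℝ → ℝ → ℝ)
    (hφ₁sm : ContDiff ℝ (⊤ : ℕ∞) (Function.uncurry φ₁)) (hφ₂sm : ContDiff ℝ (⊤ : ℕ∞) (Function.uncurry φ₂))
    (hflow₁ : ∀ t θ : ℝ, HasDerivAt (fun s => φ₁ s θ) (f₁ (φ₁ t θ)) t)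
    (hflow₂ : ∀ t θ : ℝ, HasDerivAt (fun s => φ₂ s θ) (f₂ (φ₂ t θ)) t)
    (hinit₁ : ∀ θ : ℝ, φ₁ 0 θ = θ) (hinit₂ : ∀ θ : ℝ, φ₂ 0 θ = θ) :
    (∀ t : ℝ, φ₁ t π = π ∧ φ₂ t π = π)
    ∧ ∀ t : ℝ, ∀ k : ℕ, k ≤ n →
        iteratedDeriv k (φ₁ t) π = iteratedDeriv k (φ₂ t) π := by
  have hn : (n : WithTop ℕ∞) ≤ (⊤ : ℕ∞) := by exact_mod_cast le_top
  have hle : max 1 (n : WithTop ℕ∞) ≤ (⊤ : ℕ∞) := max_le (by exact_mod_cast le_top) hn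
  exact stmt_12_general (hf₁.of_le hle) (hf₂.of_le hle) hv₁ hjets
    ⟨fun θ t ↦ hflow₁ t θ, hinit₁⟩ ⟨fun θ t ↦ hflow₂ t θ, hinit₂⟩
    (contDiff_of_contDiff_uncurry (hφ₁sm.of_le hn)) (contDiff_of_contDiff_uncurry (hφ₂sm.of_le hn))
end

section
/- Let γ : ℝ → ℝ be a strictly increasing continuously differentiable bijection with γ(θ+2π) = γ(θ)+2π for all θ, γ(π) = π and γ'(π) = 1, which is infinitely differentiable on ℝ ∖ (π + 2πℤ) and whose one-sided derivatives of all orders exist at π. Then there exist: a 2π-periodic function g : ℝ → ℝ which is continuously differentiable on ℝ, infinitely differentiable on ℝ ∖ (π + 2πℤ) and has one-sided derivatives of all orders at π; a map φ : ℝ × ℝ → ℝ with ∂_t φ(t,θ) = g(φ(t,θ)) and φ(0,θ) = θ for all t, θ; and a smooth strictly increasing bijection γ̲ : ℝ → ℝ with γ̲(θ+2π) = γ̲(θ)+2π, such that γ(θ) = φ(1, γ̲(θ)) for all θ ∈ ℝ. -/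
open scoped Real

/-- `f` has one-sided derivatives of all orders at `π`, in the sense that all its
iterated derivatives admit one-sided limits at `π`. -/
def OneSidedSmoothAtPi (f : ℝ → ℝ) : Prop :=
  ∃ dp dm : ℕ → ℝ, ∀ k : ℕ,
    Filter.Tendsto (iteratedDeriv k f) (nhdsWithin π (Set.Ioi π)) (nhds (dp k)) ∧
    Filter.Tendsto (iteratedDeriv k f) (nhdsWithin π (Set.Iio π)) (nhds (dm k))

/-!
The time-`t` map `S_t` of the flow of `θ' = sin θ` fixes `π` with multiplier `e⁻ᵗ`. Hence
`F = γ ∘ S₁` is a local contraction at `π` with multiplier `e⁻¹`, smooth up to `π` on either side,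
and Koenigs linearization, applied on each side separately, yields a `C¹` and piecewise smooth `κ`
with `κ ∘ F = e⁻¹ κ` near `π`, `κ π = 0` and `κ' π = 1`. Since `π + 2 arctan y` conjugates
multiplication by `e⁻¹` to `S₁`, the map `K = π + 2 arctan (κ / 2)` satisfies `K ∘ F = S₁ ∘ K` near
`π`. Away from `π` it may be modified freely, so it extends to a lift of a circle diffeomorphism.

Let `g = (sin ∘ K) / K'` be the pullback of `sin` under `K`, with flow `φ_t = K⁻¹ ∘ S_t ∘ K`. Near
`π` the conjugacy reads `γ ∘ S₁ = φ₁`, so `φ₁⁻¹ ∘ γ` equals the smooth map `S₋₁` there; elsewhere it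
is smooth because all its factors are.
-/

section Calculus

open Set Filter Topology
open scoped ContDiff

lemma contDiffOn_add_one_of_hasDerivWithinAt {s : Set ℝ} {f f' : ℝ → ℝ} {n : ℕ}
    (hs : UniqueDiffOn ℝ s) (hf : ∀ x ∈ s, HasDerivWithinAt f (f' x) s x)
    (hf' : ContDiffOn ℝ n f' s) : ContDiffOn ℝ (n + 1) f s :=
  (contDiffOn_succ_iff_derivWithin hs).2
    ⟨fun x hx => (hf x hx).differentiableWithinAt, by simp,
      hf'.congr fun x hx => (hf x hx).derivWithin (hs x hx)⟩

lemma contDiffOn_infty_of_hasDerivWithinAt {s : Set ℝ} {f f' : ℝ → ℝ}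
    (hs : UniqueDiffOn ℝ s) (hf : ∀ x ∈ s, HasDerivWithinAt f (f' x) s x)
    (hf' : ContDiffOn ℝ ∞ f' s) : ContDiffOn ℝ ∞ f s :=
  (contDiffOn_infty_iff_derivWithin hs).2
    ⟨fun x hx => (hf x hx).differentiableWithinAt,
      hf'.congr fun x hx => (hf x hx).derivWithin (hs x hx)⟩

lemma exists_primitive_on_Icc {a b : ℝ} (hab : a ≤ b) {w : ℝ → ℝ}
    (hw : ContinuousOn w (Icc a b)) (c y : ℝ) :
    ∃ V : ℝ → ℝ, V c = y ∧ ∀ x ∈ Icc a b, HasDerivWithinAt V (w x) (Icc a b) x := by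
  set e : ℝ → ℝ := IccExtend hab ((Icc a b).domRestrict w)
  have he : Continuous e := (continuousOn_iff_continuous_domRestrict.1 hw).Icc_extend'
  refine ⟨fun x => y + ∫ t in c..x, e t, by simp, fun x hx => ?_⟩
  have hex : e x = w x := IccExtend_of_mem hab _ hx
  exact hex ▸ ((he.integral_hasStrictDerivAt c x).hasDerivAt.const_add y).hasDerivWithinAt

lemma eq_of_hasDerivWithinAt_zero {s : Set ℝ} (hs : Convex ℝ s) {f : ℝ → ℝ}
    (hf : ∀ x ∈ s, HasDerivWithinAt f 0 s x) {x y : ℝ} (hx : x ∈ s) (hy : y ∈ s) :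
    f x = f y := by
  have hle := hs.norm_image_sub_le_of_norm_hasDerivWithin_le (C := 0) hf (by simp) hy hx
  simpa [sub_eq_zero] using hle

lemma abs_le_of_abs_deriv_le_of_eq_zero {a b c C : ℝ} (hc : c ∈ Icc a b) {f f' : ℝ → ℝ}
    (hfc : f c = 0) (hf : ∀ x ∈ Icc a b, HasDerivWithinAt f (f' x) (Icc a b) x)
    (hf' : ∀ x ∈ Icc a b, |f' x| ≤ C) : ∀ x ∈ Icc a b, |f x| ≤ C * (b - a) := by
  intro x hx
  have hC : 0 ≤ C := (abs_nonneg _).trans (hf' x hx)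
  have hxc : |x - c| ≤ b - a := abs_le.2 ⟨by linarith [hx.1, hc.2], by linarith [hx.2, hc.1]⟩
  have hmean := (convex_Icc a b).norm_image_sub_le_of_norm_hasDerivWithin_le hf hf' hc hx
  rw [hfc, sub_zero] at hmean
  exact hmean.trans (mul_le_mul_of_nonneg_left hxc hC)

lemma eq_zero_of_contracting_bound {X : Type*} [TopologicalSpace X] {s : Set X}
    (hs : IsCompact s) {d : X → ℝ} (hd : ContinuousOn d s) {θ : ℝ} (hθ : θ < 1)
    (hstep : ∀ M, (∀ x ∈ s, |d x| ≤ M) → ∀ x ∈ s, |d x| ≤ θ * M) {x : X} (hx : x ∈ s) :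
    d x = 0 := by
  obtain ⟨y, hy, hmax⟩ := hs.exists_isMaxOn ⟨x, hx⟩ hd.abs
  have hdy : |d y| ≤ θ * |d y| := hstep _ (fun z hz => hmax hz) y hy
  have hxy : |d x| ≤ |d y| := hmax hx
  have : |d y| ≤ 0 := by nlinarith [abs_nonneg (d y)]
  exact abs_nonpos_iff.1 (hxy.trans this)

end Calculus

section Koenigs

open Real Set Filter Topology
open scoped ContDiff

lemma exists_twisted_cohomological_solution {X : Type*} [TopologicalSpace X] [CompactSpace X]
    (F : C(X, X)) (A h : C(X, ℝ)) {ρ : ℝ} (hρ : ρ < 1) (hA : ∀ x, |A x| ≤ ρ) :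
    ∃ v : C(X, ℝ), ∀ x, v x = A x * v (F x) + h x := by
  let T : C(X, ℝ) → C(X, ℝ) := fun v => A * v.comp F + h
  have hT : ContractingWith ρ.toNNReal T := by
    refine ⟨by simpa using hρ, LipschitzWith.of_dist_le_mul fun v w => ?_⟩
    refine (ContinuousMap.dist_le (by positivity)).2 fun x => ?_
    calc dist (T v x) (T w x) = |A x| * dist (v (F x)) (w (F x)) := by
          simp [T, Real.dist_eq, ← mul_sub, abs_mul]
      _ ≤ ρ.toNNReal * dist v w :=
          mul_le_mul ((hA x).trans (Real.le_coe_toNNReal ρ))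
            (ContinuousMap.dist_apply_le_dist _) dist_nonneg NNReal.zero_le_coe
  exact ⟨hT.fixedPoint T, fun x => (DFunLike.congr_fun hT.fixedPoint_isFixedPt x).symm⟩

variable {a b c ρ : ℝ} {F : ℝ → ℝ}

lemma exists_twisted_cohomological_solution_on_Icc {A h : ℝ → ℝ} (hab : a ≤ b)
    (hF : ContinuousOn F (Icc a b)) (hmaps : MapsTo F (Icc a b) (Icc a b))
    (hA : ContinuousOn A (Icc a b)) (hh : ContinuousOn h (Icc a b))
    (hρ : ρ < 1) (hAρ : ∀ x ∈ Icc a b, |A x| ≤ ρ) :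
    ∃ v : ℝ → ℝ, ContinuousOn v (Icc a b) ∧ ∀ x ∈ Icc a b, v x = A x * v (F x) + h x := by
  obtain ⟨v, hv⟩ := exists_twisted_cohomological_solution
    ⟨hmaps.restrict F _ _, hF.mapsToRestrict hmaps⟩
    ⟨_, continuousOn_iff_continuous_domRestrict.1 hA⟩
    ⟨_, continuousOn_iff_continuous_domRestrict.1 hh⟩ hρ fun x => hAρ x x.2
  refine ⟨IccExtend hab v, v.continuous.Icc_extend'.continuousOn, fun x hx => ?_⟩
  rw [IccExtend_of_mem hab _ hx, IccExtend_of_mem hab _ (hmaps hx)]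
  exact hv ⟨x, hx⟩

/- Let `V` be the primitive of `w` with `V c = v c`. The residual `r = V - A * V ∘ F - h` vanishes
at `c` and has derivative `A' * (v - V) ∘ F`, so any bound on `v - V` improves by the factor
`ρ + B * (b - a)`. -/
lemma hasDerivWithinAt_of_twisted_cohomological {A A' h h' F' v w : ℝ → ℝ} {B : ℝ}
    (hc : c ∈ Icc a b) (hFc : F c = c) (hmaps : MapsTo F (Icc a b) (Icc a b))
    (hF : ∀ x ∈ Icc a b, HasDerivWithinAt F (F' x) (Icc a b) x)
    (hA : ∀ x ∈ Icc a b, HasDerivWithinAt A (A' x) (Icc a b) x)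
    (hh : ∀ x ∈ Icc a b, HasDerivWithinAt h (h' x) (Icc a b) x)
    (hAρ : ∀ x ∈ Icc a b, |A x| ≤ ρ) (hA'B : ∀ x ∈ Icc a b, |A' x| ≤ B)
    (hρB : ρ + B * (b - a) < 1) (hv : ContinuousOn v (Icc a b)) (hw : ContinuousOn w (Icc a b))
    (hveq : ∀ x ∈ Icc a b, v x = A x * v (F x) + h x)
    (hweq : ∀ x ∈ Icc a b, w x = A x * F' x * w (F x) + (h' x + A' x * v (F x))) :
    ∀ x ∈ Icc a b, HasDerivWithinAt v (w x) (Icc a b) x := by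
  obtain ⟨V, hVc, hV⟩ := exists_primitive_on_Icc (hc.1.trans hc.2) hw c (v c)
  have hVcont : ContinuousOn V (Icc a b) := fun x hx => (hV x hx).continuousWithinAt
  let r : ℝ → ℝ := fun x => V x - (A x * V (F x) + h x)
  have hrc : r c = 0 := by simp only [r, hFc, hVc]; linarith [hFc ▸ hveq c hc]
  have hr : ∀ x ∈ Icc a b, HasDerivWithinAt r (A' x * (v (F x) - V (F x))) (Icc a b) x := by
    intro x hx
    have hVF := (hV (F x) (hmaps hx)).comp x (hF x hx) hmaps
    refine ((hV x hx).sub (((hA x hx).mul hVF).add (hh x hx))).congr_deriv ?_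
    simp only [hweq x hx, Function.comp_apply]
    ring
  have hvV : ∀ x ∈ Icc a b, v x - V x = 0 := fun x => by
    refine eq_zero_of_contracting_bound isCompact_Icc (hv.sub hVcont) hρB fun M hM x hx => ?_
    have hrx : |r x| ≤ B * M * (b - a) :=
      abs_le_of_abs_deriv_le_of_eq_zero hc hrc hr (fun y hy => by
        rw [abs_mul]
        exact mul_le_mul (hA'B y hy) (hM _ (hmaps hy)) (abs_nonneg _)
          ((abs_nonneg _).trans (hA'B y hy))) x hx
    calc |v x - V x| = |A x * (v (F x) - V (F x)) - r x| := by
          congr 1; simp only [r, hveq x hx]; ring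
      _ ≤ |A x| * |v (F x) - V (F x)| + |r x| := by rw [← abs_mul]; exact abs_sub _ _
      _ ≤ ρ * M + B * M * (b - a) :=
          add_le_add (mul_le_mul (hAρ x hx) (hM _ (hmaps hx)) (abs_nonneg _)
            ((abs_nonneg _).trans (hAρ x hx))) hrx
      _ = (ρ + B * (b - a)) * M := by ring
  intro x hx
  exact (hV x hx).congr (fun y hy => sub_eq_zero.1 (hvV y hy)) (sub_eq_zero.1 (hvV x hx))

lemma natCast_add_one_mul_pow_mul_one_sub_le_one (hρ0 : 0 ≤ ρ) (hρ1 : ρ ≤ 1) (k : ℕ) :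
    (k + 1) * ρ ^ k * (1 - ρ) ≤ 1 := by
  suffices h : (k + 1) * ρ ^ k * (1 - ρ) ≤ 1 - ρ ^ (k + 1) from
    h.trans (sub_le_self _ (by positivity))
  induction k with
  | zero => simp
  | succ k ih =>
    have hpow : ρ ^ (k + 1) * (1 - ρ) ≤ 1 - ρ :=
      mul_le_of_le_one_left (by linarith) (pow_le_one₀ hρ0 hρ1)
    calc ((k + 1 : ℕ) + 1) * ρ ^ (k + 1) * (1 - ρ)
        = (k + 1) * ρ ^ k * (1 - ρ) * ρ + ρ ^ (k + 1) * (1 - ρ) := by push_cast; ring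
      _ ≤ (1 - ρ ^ (k + 1)) * ρ + (1 - ρ) := by gcongr
      _ = 1 - ρ ^ (k + 1 + 1) := by ring

/-- `F` is a smooth increasing contraction of `[a, b]` with rate `ρ < 1` and fixed point `c`, whose
second derivative is so small relative to `b - a` that the equations obtained by differentiating
the linearization problem are contracting at every order. All derivatives are taken within
`[a, b]`, so that `c` may be an endpoint. -/
structure IsTameContraction (F : ℝ → ℝ) (ρ c a b : ℝ) : Prop where
  lt : a < b
  mem : c ∈ Icc a b
  map_self : F c = c
  contDiffOn : ContDiffOn ℝ ∞ F (Icc a b)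
  rate_lt_one : ρ < 1
  derivWithin_pos : ∀ x ∈ Icc a b, 0 < derivWithin F (Icc a b) x
  derivWithin_le : ∀ x ∈ Icc a b, derivWithin F (Icc a b) x ≤ ρ
  distortion_le : ∀ x ∈ Icc a b,
    |derivWithin (derivWithin F (Icc a b)) (Icc a b) x| * (b - a) ≤ (1 - ρ) ^ 2 / 2

namespace IsTameContraction

variable (hF : IsTameContraction F ρ c a b)

include hF

lemma uniqueDiffOn : UniqueDiffOn ℝ (Icc a b) := uniqueDiffOn_Icc hF.lt

lemma rate_nonneg : 0 ≤ ρ :=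
  (hF.derivWithin_pos c hF.mem).le.trans (hF.derivWithin_le c hF.mem)

lemma contDiffOn_derivWithin : ContDiffOn ℝ ∞ (derivWithin F (Icc a b)) (Icc a b) :=
  hF.contDiffOn.derivWithin hF.uniqueDiffOn (by simp)

lemma hasDerivWithinAt {x : ℝ} (hx : x ∈ Icc a b) :
    HasDerivWithinAt F (derivWithin F (Icc a b) x) (Icc a b) x :=
  (hF.contDiffOn.differentiableOn (by simp) x hx).hasDerivWithinAt

lemma hasDerivWithinAt_derivWithin {x : ℝ} (hx : x ∈ Icc a b) :
    HasDerivWithinAt (derivWithin F (Icc a b))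
      (derivWithin (derivWithin F (Icc a b)) (Icc a b) x) (Icc a b) x :=
  (hF.contDiffOn_derivWithin.differentiableOn (by simp) x hx).hasDerivWithinAt

lemma mapsTo : MapsTo F (Icc a b) (Icc a b) := by
  intro x hx
  have hmono : MonotoneOn F (Icc a b) :=
    monotoneOn_of_hasDerivWithinAt_nonneg (convex_Icc a b) hF.contDiffOn.continuousOn
      (fun y hy => (hF.hasDerivWithinAt (interior_subset hy)).mono interior_subset)
      (fun y hy => (hF.derivWithin_pos y (interior_subset hy)).le)
  have hcontr : |F x - c| ≤ |x - c| := by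
    have := (convex_Icc a b).norm_image_sub_le_of_norm_hasDerivWithin_le (C := 1)
      (fun y hy => hF.hasDerivWithinAt hy) (fun y hy => by
        rw [Real.norm_eq_abs, abs_of_pos (hF.derivWithin_pos y hy)]
        exact (hF.derivWithin_le y hy).trans hF.rate_lt_one.le) hF.mem hx
    simpa [hF.map_self] using this
  rcases le_total c x with hcx | hxc
  · have hcF : c ≤ F x := hF.map_self ▸ hmono hF.mem hx hcx
    rw [abs_of_nonneg (sub_nonneg.2 hcF), abs_of_nonneg (sub_nonneg.2 hcx)] at hcontr
    exact ⟨hF.mem.1.trans hcF, by linarith [hx.2]⟩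
  · have hFc : F x ≤ c := hF.map_self ▸ hmono hx hF.mem hxc
    rw [abs_of_nonpos (sub_nonpos.2 hFc), abs_of_nonpos (sub_nonpos.2 hxc)] at hcontr
    exact ⟨by linarith [hx.1], hFc.trans hF.mem.2⟩

lemma abs_derivWithin_pow_le {x : ℝ} (hx : x ∈ Icc a b) (k : ℕ) :
    |derivWithin F (Icc a b) x ^ (k + 1)| ≤ ρ := by
  have hpos := hF.derivWithin_pos x hx
  rw [abs_of_pos (by positivity)]
  exact (pow_le_pow_left₀ hpos.le (hF.derivWithin_le x hx) _).trans
    (pow_le_of_le_one hF.rate_nonneg hF.rate_lt_one.le k.succ_ne_zero)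

lemma abs_deriv_derivWithin_pow_le {x : ℝ} (hx : x ∈ Icc a b) (k : ℕ) :
    |(k + 1) * derivWithin F (Icc a b) x ^ k *
      derivWithin (derivWithin F (Icc a b)) (Icc a b) x| ≤ (1 - ρ) / 2 / (b - a) := by
  have hρ := hF.rate_nonneg
  have hρ1 := sub_pos.2 hF.rate_lt_one
  have hpos := hF.derivWithin_pos x hx
  have hle := hF.derivWithin_le x hx
  rw [le_div_iff₀ (sub_pos.2 hF.lt), abs_mul, abs_of_nonneg (by positivity), mul_assoc]
  calc (k + 1) * derivWithin F (Icc a b) x ^ k *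
        (|derivWithin (derivWithin F (Icc a b)) (Icc a b) x| * (b - a))
      ≤ (k + 1) * ρ ^ k * ((1 - ρ) ^ 2 / 2) := by
        have hba := sub_pos.2 hF.lt
        have := hF.distortion_le x hx
        gcongr
    _ = (k + 1) * ρ ^ k * (1 - ρ) * ((1 - ρ) / 2) := by ring
    _ ≤ 1 * ((1 - ρ) / 2) := by
        gcongr
        exact natCast_add_one_mul_pow_mul_one_sub_le_one hρ hF.rate_lt_one.le k
    _ = (1 - ρ) / 2 := one_mul _

lemma exists_solution (k : ℕ) {h : ℝ → ℝ} (hh : ContinuousOn h (Icc a b)) :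
    ∃ v : ℝ → ℝ, ContinuousOn v (Icc a b) ∧
      ∀ x ∈ Icc a b, v x = derivWithin F (Icc a b) x ^ (k + 1) * v (F x) + h x :=
  exists_twisted_cohomological_solution_on_Icc hF.lt.le hF.contDiffOn.continuousOn hF.mapsTo
    (hF.contDiffOn_derivWithin.continuousOn.pow _) hh hF.rate_lt_one
    fun _ hx => hF.abs_derivWithin_pow_le hx k

/- Differentiating `v = (F') ^ (k + 1) * v ∘ F + h` gives an equation of the same form with
exponent `k + 2`; hence the induction over all exponents at once. -/
lemma contDiffOn_solution (n k : ℕ) {h v : ℝ → ℝ} (hh : ContDiffOn ℝ n h (Icc a b))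
    (hv : ContinuousOn v (Icc a b))
    (hveq : ∀ x ∈ Icc a b, v x = derivWithin F (Icc a b) x ^ (k + 1) * v (F x) + h x) :
    ContDiffOn ℝ n v (Icc a b) := by
  induction n generalizing k h v with
  | zero => simpa [contDiffOn_zero] using hv
  | succ n ih =>
    push_cast at hh ⊢
    let p := derivWithin F (Icc a b)
    let A' : ℝ → ℝ := fun x => (k + 1) * p x ^ k * derivWithin p (Icc a b) x
    have hp : ContDiffOn ℝ n p (Icc a b) := contDiffOn_infty.1 hF.contDiffOn_derivWithin n
    have hp' : ContDiffOn ℝ n (derivWithin p (Icc a b)) (Icc a b) :=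
      contDiffOn_infty.1 (hF.contDiffOn_derivWithin.derivWithin hF.uniqueDiffOn (by simp)) n
    have hA : ∀ x ∈ Icc a b, HasDerivWithinAt (fun y => p y ^ (k + 1)) (A' x) (Icc a b) x :=
      fun x hx => ((hF.hasDerivWithinAt_derivWithin hx).pow (k + 1)).congr_deriv (by simp [A', p])
    have hvn : ContDiffOn ℝ n v (Icc a b) := ih k hh.of_succ hv hveq
    have hsource : ContDiffOn ℝ n (fun x => derivWithin h (Icc a b) x + A' x * v (F x))
        (Icc a b) :=
      (hh.derivWithin hF.uniqueDiffOn le_rfl).add (((contDiffOn_const.mul (hp.pow k)).mul hp').mul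
        (hvn.comp (contDiffOn_infty.1 hF.contDiffOn n) hF.mapsTo))
    obtain ⟨w, hw, hweq⟩ := hF.exists_solution (k + 1) hsource.continuousOn
    have hvw : ∀ x ∈ Icc a b, HasDerivWithinAt v (w x) (Icc a b) x := by
      have hlt : ρ + (1 - ρ) / 2 / (b - a) * (b - a) < 1 := by
        rw [div_mul_cancel₀ _ (sub_pos.2 hF.lt).ne']
        linarith [hF.rate_lt_one]
      refine hasDerivWithinAt_of_twisted_cohomological hF.mem hF.map_self hF.mapsTo
        (fun x hx => hF.hasDerivWithinAt hx) hA
        (fun x hx => (hh.differentiableOn (by simp) x hx).hasDerivWithinAt)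
        (fun x hx => hF.abs_derivWithin_pow_le hx k)
        (fun x hx => hF.abs_deriv_derivWithin_pow_le hx k) hlt hv hw hveq fun x hx => ?_
      rw [hweq x hx, pow_succ (derivWithin F _ x) (k + 1)]
    exact contDiffOn_add_one_of_hasDerivWithinAt hF.uniqueDiffOn hvw (ih (k + 1) hsource hw hweq)

/- `u` plays the role of `log κ'`: differentiating `κ ∘ F = F' c • κ` twice gives the equation
for `w = u'`. -/
lemma exists_log_derivative :
    ∃ u : ℝ → ℝ, ContDiffOn ℝ ∞ u (Icc a b) ∧ u c = 0 ∧
      ∀ x ∈ Icc a b, exp (u (F x)) * derivWithin F (Icc a b) x =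
        derivWithin F (Icc a b) c * exp (u x) := by
  let p := derivWithin F (Icc a b)
  have hp0 : ∀ x ∈ Icc a b, p x ≠ 0 := fun x hx => (hF.derivWithin_pos x hx).ne'
  have hquot : ContDiffOn ℝ ∞ (fun x => derivWithin p (Icc a b) x / p x) (Icc a b) :=
    (hF.contDiffOn_derivWithin.derivWithin hF.uniqueDiffOn (by simp)).div
      hF.contDiffOn_derivWithin hp0
  obtain ⟨w, hw, hweq⟩ := hF.exists_solution 0 hquot.continuousOn
  have hw' : ContDiffOn ℝ ∞ w (Icc a b) :=
    contDiffOn_infty.2 fun n => hF.contDiffOn_solution n 0 (contDiffOn_infty.1 hquot n) hw hweq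
  obtain ⟨u, huc, hu⟩ := exists_primitive_on_Icc hF.lt.le hw c 0
  refine ⟨u, contDiffOn_infty_of_hasDerivWithinAt hF.uniqueDiffOn hu hw', huc, fun x hx => ?_⟩
  have hconst : u x - u (F x) - log (p x) = u c - u (F c) - log (p c) := by
    refine eq_of_hasDerivWithinAt_zero (convex_Icc a b)
      (f := fun x => u x - u (F x) - log (p x)) (fun y hy => ?_) hx hF.mem
    have huF := (hu (F y) (hF.mapsTo hy)).comp y (hF.hasDerivWithinAt hy) hF.mapsTo
    refine (((hu y hy).sub huF).sub
      ((hF.hasDerivWithinAt_derivWithin hy).log (hp0 y hy))).congr_deriv ?_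
    rw [hweq y hy]
    ring
  have hux : u x = u (F x) + log (p x) - log (p c) := by
    rw [hF.map_self, huc] at hconst
    linarith
  rw [hux, exp_sub, exp_add, exp_log (hF.derivWithin_pos x hx),
    exp_log (hF.derivWithin_pos c hF.mem), mul_div_cancel₀ _ (hp0 c hF.mem)]

lemma exists_linearization :
    ∃ κ : ℝ → ℝ, ContDiffOn ℝ ∞ κ (Icc a b) ∧ κ c = 0 ∧ HasDerivWithinAt κ 1 (Icc a b) c ∧
      ∀ x ∈ Icc a b, κ (F x) = derivWithin F (Icc a b) c * κ x := by
  obtain ⟨u, hu, huc, hueq⟩ := hF.exists_log_derivative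
  obtain ⟨κ, hκc, hκ⟩ := exists_primitive_on_Icc hF.lt.le hu.exp.continuousOn c 0
  refine ⟨κ, contDiffOn_infty_of_hasDerivWithinAt hF.uniqueDiffOn hκ hu.exp, hκc,
    by simpa [huc] using hκ c hF.mem, fun x hx => ?_⟩
  have hconst : κ (F x) - derivWithin F (Icc a b) c * κ x =
      κ (F c) - derivWithin F (Icc a b) c * κ c := by
    refine eq_of_hasDerivWithinAt_zero (convex_Icc a b)
      (f := fun x => κ (F x) - derivWithin F (Icc a b) c * κ x) (fun y hy => ?_) hx hF.mem
    have hκF := (hκ (F y) (hF.mapsTo hy)).comp y (hF.hasDerivWithinAt hy) hF.mapsTo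
    exact (hκF.sub ((hκ y hy).const_mul _)).congr_deriv (sub_eq_zero.2 (hueq y hy))
  simpa [hF.map_self, hκc, sub_eq_zero] using hconst

end IsTameContraction

lemma exists_forall_isTameContraction {μ : ℝ} (hab : a < b) (hc : c ∈ Icc a b) (hFc : F c = c)
    (hF : ContDiffOn ℝ ∞ F (Icc a b)) (hμ : HasDerivWithinAt F μ (Icc a b) c) (hμ0 : 0 < μ)
    (hμ1 : μ < 1) :
    ∃ ρ, ∃ ε > 0, ∀ a' b', a ≤ a' → b' ≤ b → a' < b' → c ∈ Icc a' b' → b' - a' ≤ ε →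
      IsTameContraction F ρ c a' b' := by
  obtain ⟨ρ, hμρ, hρ1⟩ := exists_between hμ1
  set p := derivWithin F (Icc a b) with hp_def
  have hU := uniqueDiffOn_Icc hab
  have hp : ContDiffOn ℝ ∞ p (Icc a b) := hF.derivWithin hU (by simp)
  have hq : ContDiffOn ℝ ∞ (derivWithin p (Icc a b)) (Icc a b) := hp.derivWithin hU (by simp)
  have hpc : p c ∈ Ioo 0 ρ := by rw [hp_def, hμ.derivWithin (hU c hc)]; exact ⟨hμ0, hμρ⟩
  obtain ⟨B, hB⟩ := isCompact_Icc.exists_bound_of_continuousOn hq.continuousOn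
  have hB0 : 0 ≤ B := (norm_nonneg _).trans (hB c hc)
  obtain ⟨ε, hε, hpε⟩ := Metric.mem_nhdsWithin_iff.1
    (hp.continuousOn c hc (Ioo_mem_nhds hpc.1 hpc.2))
  have : 0 < 1 - ρ := sub_pos.2 hρ1
  refine ⟨ρ, min (ε / 2) ((1 - ρ) ^ 2 / 2 / (B + 1)), by positivity,
    fun a' b' ha hb hab' hc' hlen => ?_⟩
  have hsub : Icc a' b' ⊆ Icc a b := Icc_subset_Icc ha hb
  have hU' := uniqueDiffOn_Icc hab'
  have hp' : EqOn (derivWithin F (Icc a' b')) p (Icc a' b') := fun x hx =>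
    derivWithin_subset hsub (hU' x hx) (hF.differentiableOn (by simp) x (hsub hx))
  have hpx : ∀ x ∈ Icc a' b', p x ∈ Ioo 0 ρ := fun x hx => by
    refine hpε ⟨?_, hsub hx⟩
    rw [Metric.mem_ball, Real.dist_eq, abs_lt]
    have := hlen.trans (min_le_left _ _)
    constructor <;> linarith [hx.1, hx.2, hc'.1, hc'.2]
  refine ⟨hab', hc', hFc, hF.mono hsub, hρ1, fun x hx => hp' hx ▸ (hpx x hx).1,
    fun x hx => hp' hx ▸ (hpx x hx).2.le, fun x hx => ?_⟩
  rw [derivWithin_congr hp' (hp' hx),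
    derivWithin_subset hsub (hU' x hx) (hp.differentiableOn (by simp) x (hsub hx))]
  calc |derivWithin p (Icc a b) x| * (b' - a')
      ≤ (B + 1) * ((1 - ρ) ^ 2 / 2 / (B + 1)) :=
        mul_le_mul ((hB x (hsub hx)).trans (by linarith)) (hlen.trans (min_le_right _ _))
          (sub_pos.2 hab').le (by linarith)
    _ = (1 - ρ) ^ 2 / 2 := mul_div_cancel₀ _ (by positivity)

end Koenigs

section OneSidedLimits

open Set Filter Topology
open scoped ContDiff

lemma contDiffOn_infty_of_forall_hasDerivWithinAt_succ {s : Set ℝ} (hs : UniqueDiffOn ℝ s)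
    {D : ℕ → ℝ → ℝ} (hD : ∀ k, ∀ x ∈ s, HasDerivWithinAt (D k) (D (k + 1) x) s x) (k : ℕ) :
    ContDiffOn ℝ ∞ (D k) s := by
  refine contDiffOn_infty.2 fun n => ?_
  induction n generalizing k with
  | zero => exact contDiffOn_zero.2 fun x hx => (hD k x hx).continuousWithinAt
  | succ n ih =>
    exact_mod_cast contDiffOn_add_one_of_hasDerivWithinAt hs (hD k) (ih (k + 1))

variable {a b : ℝ} {f : ℝ → ℝ}

lemma differentiableAt_iteratedDeriv_of_contDiffAt {x : ℝ} (hf : ContDiffAt ℝ ∞ f x) (k : ℕ) :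
    DifferentiableAt ℝ (iteratedDeriv k f) x := by
  rw [iteratedDeriv_eq_equiv_comp]
  exact (LinearIsometryEquiv.differentiableAt _).comp x
    ((hf.iteratedFDeriv_right (m := 1) (i := k) (by exact_mod_cast le_top)).differentiableAt
      one_ne_zero)

lemma hasDerivWithinAt_Icc_of_tendsto_deriv {x e : ℝ} (hf : DifferentiableOn ℝ f (Ioo a b))
    (hcont : ContinuousOn f (Icc a b)) (hab : a < b)
    (hlim : Tendsto (deriv f) (𝓝[Ioo a b] x) (𝓝 e)) :
    HasDerivWithinAt f e (Icc a b) x := by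
  have hclosure : closure (Ioo a b) = Icc a b := closure_Ioo hab.ne
  rw [← hclosure]
  refine hasFDerivWithinAt_closure_of_tendsto_fderiv hf (convex_Ioo a b) isOpen_Ioo
    (fun y hy => (hcont y (hclosure ▸ hy)).mono Ioo_subset_Icc_self) ?_
  have hspan := (ContinuousLinearMap.toSpanSingletonCLE (𝕜 := ℝ) (E := ℝ)).continuous.tendsto e
  exact (hspan.comp hlim).congr fun y => toSpanSingleton_deriv

lemma contDiffOn_Icc_of_tendsto_iteratedDeriv (hab : a < b) (hcont : ContinuousOn f (Icc a b))
    (hf : ContDiffOn ℝ ∞ f (Ioo a b))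
    (hlim : ∀ k, ∀ x ∈ Icc a b, ∃ d, Tendsto (iteratedDeriv k f) (𝓝[Ioo a b] x) (𝓝 d)) :
    ContDiffOn ℝ ∞ f (Icc a b) := by
  have hclosure : Icc a b ⊆ closure (Ioo a b) := (closure_Ioo hab.ne).ge
  let D : ℕ → ℝ → ℝ := fun k => extendFrom (Ioo a b) (iteratedDeriv k f)
  have hderiv : ∀ k, ∀ x ∈ Ioo a b,
      HasDerivAt (iteratedDeriv k f) (iteratedDeriv (k + 1) f x) x := by
    intro k x hx
    rw [iteratedDeriv_succ]
    exact (differentiableAt_iteratedDeriv_of_contDiffAt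
      (hf.contDiffAt (isOpen_Ioo.mem_nhds hx)) k).hasDerivAt
  have hDeq : ∀ k, EqOn (D k) (iteratedDeriv k f) (Ioo a b) := fun k x hx =>
    extendFrom_eq (hclosure (Ioo_subset_Icc_self hx))
      ((hderiv k x hx).continuousAt.tendsto.mono_left nhdsWithin_le_nhds)
  have hDderiv : ∀ k, ∀ x ∈ Ioo a b, HasDerivAt (D k) (iteratedDeriv (k + 1) f x) x :=
    fun k x hx => (hderiv k x hx).congr_of_eventuallyEq
      ((hDeq k).eventuallyEq_of_mem (isOpen_Ioo.mem_nhds hx))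
  have hD : ∀ k, ∀ x ∈ Icc a b, HasDerivWithinAt (D k) (D (k + 1) x) (Icc a b) x := by
    intro k x hx
    refine hasDerivWithinAt_Icc_of_tendsto_deriv
      (fun y hy => (hDderiv k y hy).differentiableAt.differentiableWithinAt)
      (continuousOn_extendFrom hclosure (hlim k)) hab ?_
    refine (tendsto_extendFrom (hlim (k + 1) x hx)).congr' ?_
    filter_upwards [self_mem_nhdsWithin] with y hy using (hDderiv k y hy).deriv.symm
  refine (contDiffOn_infty_of_forall_hasDerivWithinAt_succ (uniqueDiffOn_Icc hab) hD 0).congr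
    fun x hx => (extendFrom_eq (hclosure hx) ?_).symm
  rw [iteratedDeriv_zero]
  exact (hcont x hx).mono Ioo_subset_Icc_self

lemma exists_tendsto_iteratedDeriv_of_contDiffOn_Icc (hab : a < b)
    (hf : ContDiffOn ℝ ∞ f (Icc a b)) (k : ℕ) {x : ℝ} (hx : x ∈ Icc a b) :
    ∃ d, Tendsto (iteratedDeriv k f) (𝓝[Ioo a b] x) (𝓝 d) := by
  refine ⟨iteratedDerivWithin k f (Icc a b) x, ?_⟩
  have hcont := hf.continuousOn_iteratedDerivWithin (m := k) (by exact_mod_cast le_top)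
    (uniqueDiffOn_Icc hab)
  refine ((hcont x hx).mono Ioo_subset_Icc_self).tendsto.congr' ?_
  filter_upwards [self_mem_nhdsWithin] with y hy
  exact iteratedDerivWithin_eq_iteratedDeriv (uniqueDiffOn_Icc hab)
    ((contDiffOn_infty.1 hf k).contDiffAt (Icc_mem_nhds hy.1 hy.2)) (Ioo_subset_Icc_self hy)

end OneSidedLimits

section PiecewiseSmooth

open Set Filter Topology
open scoped ContDiff

/-- `f` is smooth up to and including `c` on each side of `c`; the two germs may differ at `c`
beyond the common value `f c`. Stating this for all small radii `δ` lets several such conditions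
be combined. -/
def PiecewiseSmoothAt (f : ℝ → ℝ) (c : ℝ) : Prop :=
  ∀ᶠ δ in 𝓝[>] (0 : ℝ), ContDiffOn ℝ ∞ f (Icc (c - δ) c) ∧ ContDiffOn ℝ ∞ f (Icc c (c + δ))

lemma eventually_Icc_subset_of_mem_nhds {c : ℝ} {s : Set ℝ} (hs : s ∈ 𝓝 c) :
    ∀ᶠ δ in 𝓝[>] (0 : ℝ), Icc (c - δ) (c + δ) ⊆ s := by
  simpa only [Real.closedBall_eq_Icc] using
    (eventually_closedBall_subset hs).filter_mono nhdsWithin_le_nhds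

lemma piecewiseSmoothAt_of_contDiffOn {f : ℝ → ℝ} {c δ : ℝ} (hδ : 0 < δ)
    (hleft : ContDiffOn ℝ ∞ f (Icc (c - δ) c)) (hright : ContDiffOn ℝ ∞ f (Icc c (c + δ))) :
    PiecewiseSmoothAt f c := by
  filter_upwards [Ioo_mem_nhdsGT hδ] with ε hε
  exact ⟨hleft.mono (Icc_subset_Icc_left (by linarith [hε.2])),
    hright.mono (Icc_subset_Icc_right (by linarith [hε.2]))⟩

lemma piecewiseSmoothAt_of_contDiff {f : ℝ → ℝ} (hf : ContDiff ℝ ∞ f) (c : ℝ) :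
    PiecewiseSmoothAt f c :=
  .of_forall fun _ => ⟨hf.contDiffOn, hf.contDiffOn⟩

lemma piecewiseSmoothAt_ite {f g : ℝ → ℝ} {c δ : ℝ} (hδ : 0 < δ)
    (hf : ContDiffOn ℝ ∞ f (Icc (c - δ) c)) (hg : ContDiffOn ℝ ∞ g (Icc c (c + δ)))
    (hfg : f c = g c) : PiecewiseSmoothAt (fun x => if x ≤ c then f x else g x) c := by
  refine piecewiseSmoothAt_of_contDiffOn hδ (hf.congr fun x hx => if_pos hx.2)
    (hg.congr fun x hx => ?_)
  rcases hx.1.eq_or_lt with rfl | hcx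
  · rw [if_pos le_rfl, hfg]
  · rw [if_neg hcx.not_ge]

lemma hasDerivAt_ite {f g : ℝ → ℝ} {c e : ℝ} (hf : HasDerivWithinAt f e (Iic c) c)
    (hg : HasDerivWithinAt g e (Ici c) c) (hfg : f c = g c) :
    HasDerivAt (fun x => if x ≤ c then f x else g x) e c := by
  have hl : HasDerivWithinAt (fun x => if x ≤ c then f x else g x) e (Iic c) c :=
    hf.congr (fun x hx => if_pos hx) (if_pos le_rfl)
  have hr : HasDerivWithinAt (fun x => if x ≤ c then f x else g x) e (Ici c) c := by
    refine hg.congr (fun x hx => ?_) (by rw [if_pos le_rfl, hfg])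
    rcases (mem_Ici.1 hx).eq_or_lt with rfl | hcx
    · rw [if_pos le_rfl, hfg]
    · rw [if_neg hcx.not_ge]
  simpa [Iic_union_Ici] using hl.union hr

namespace PiecewiseSmoothAt

variable {f g : ℝ → ℝ} {c : ℝ}

lemma congr_of_eventuallyEq (hf : PiecewiseSmoothAt f c) (h : g =ᶠ[𝓝 c] f) :
    PiecewiseSmoothAt g c := by
  filter_upwards [hf, eventually_Icc_subset_of_mem_nhds h, self_mem_nhdsWithin]
    with δ ⟨hl, hr⟩ hsub hδ
  replace hδ : 0 < δ := hδ
  exact ⟨hl.congr fun x hx => hsub ⟨hx.1, by linarith [hx.2]⟩,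
    hr.congr fun x hx => hsub ⟨by linarith [hx.1], hx.2⟩⟩

lemma contDiff_comp (hf : PiecewiseSmoothAt f c) (hg : ContDiff ℝ ∞ g) :
    PiecewiseSmoothAt (fun x => g (f x)) c :=
  hf.mono fun _ h => ⟨hg.comp_contDiffOn h.1, hg.comp_contDiffOn h.2⟩

lemma add_contDiff (hf : PiecewiseSmoothAt f c) (hg : ContDiff ℝ ∞ g) :
    PiecewiseSmoothAt (fun x => f x + g x) c :=
  hf.mono fun _ h => ⟨h.1.add hg.contDiffOn, h.2.add hg.contDiffOn⟩

lemma continuousOn_Icc (hf : PiecewiseSmoothAt f c) :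
    ∀ᶠ δ in 𝓝[>] (0 : ℝ), ContinuousOn f (Icc (c - δ) (c + δ)) := by
  filter_upwards [hf, self_mem_nhdsWithin] with δ ⟨hl, hr⟩ hδ
  replace hδ : 0 < δ := hδ
  rw [← Icc_union_Icc_eq_Icc (b := c) (by linarith) (by linarith)]
  exact hl.continuousOn.union_of_isClosed hr.continuousOn isClosed_Icc isClosed_Icc

lemma eventually_continuousAt (hf : PiecewiseSmoothAt f c) : ∀ᶠ x in 𝓝 c, ContinuousAt f x := by
  obtain ⟨δ, hcont, hδ⟩ := (hf.continuousOn_Icc.and self_mem_nhdsWithin).exists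
  replace hδ : 0 < δ := hδ
  filter_upwards [Ioo_mem_nhds (a := c - δ) (b := c + δ) (by linarith) (by linarith)] with x hx
  exact hcont.continuousAt (Icc_mem_nhds hx.1 hx.2)

lemma comp_monotone (hf : PiecewiseSmoothAt f (g c)) (hg : PiecewiseSmoothAt g c)
    (hmono : Monotone g) : PiecewiseSmoothAt (fun x => f (g x)) c := by
  obtain ⟨ε, ⟨hfl, hfr⟩, hε⟩ := (hf.and self_mem_nhdsWithin).exists
  replace hε : 0 < ε := hε
  have hnhds : g ⁻¹' Icc (g c - ε) (g c + ε) ∈ 𝓝 c :=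
    hg.eventually_continuousAt.self_of_nhds (Icc_mem_nhds (by linarith) (by linarith))
  filter_upwards [hg, eventually_Icc_subset_of_mem_nhds hnhds, self_mem_nhdsWithin]
    with δ ⟨hgl, hgr⟩ hsub hδ
  replace hδ : 0 < δ := hδ
  exact ⟨hfl.comp hgl fun x hx => ⟨(hsub ⟨hx.1, by linarith [hx.2]⟩).1, hmono hx.2⟩,
    hfr.comp hgr fun x hx => ⟨hmono hx.1, (hsub ⟨by linarith [hx.1], hx.2⟩).2⟩⟩

lemma div (hf : PiecewiseSmoothAt f c) (hg : PiecewiseSmoothAt g c) (hgc : g c ≠ 0) :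
    PiecewiseSmoothAt (fun x => f x / g x) c := by
  have hne : ∀ᶠ x in 𝓝 c, g x ≠ 0 :=
    hg.eventually_continuousAt.self_of_nhds.eventually_ne hgc
  filter_upwards [hf, hg, eventually_Icc_subset_of_mem_nhds hne, self_mem_nhdsWithin]
    with δ ⟨hfl, hfr⟩ ⟨hgl, hgr⟩ hsub hδ
  replace hδ : 0 < δ := hδ
  exact ⟨hfl.div hgl fun x hx => hsub ⟨hx.1, by linarith [hx.2]⟩,
    hfr.div hgr fun x hx => hsub ⟨by linarith [hx.1], hx.2⟩⟩

lemma eventually_contDiffAt (hf : PiecewiseSmoothAt f c) :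
    ∀ᶠ x in 𝓝[≠] c, ContDiffAt ℝ ∞ f x := by
  obtain ⟨δ, ⟨hl, hr⟩, hδ⟩ := (hf.and self_mem_nhdsWithin).exists
  replace hδ : 0 < δ := hδ
  have hball : ∀ᶠ x in 𝓝[≠] c, x ∈ Ioo (c - δ) (c + δ) :=
    nhdsWithin_le_nhds (Ioo_mem_nhds (by linarith) (by linarith))
  filter_upwards [hball, self_mem_nhdsWithin] with x hx hxc
  rcases lt_or_gt_of_ne hxc with hxc | hcx
  · exact hl.contDiffAt (Icc_mem_nhds hx.1 hxc)
  · exact hr.contDiffAt (Icc_mem_nhds hcx hx.2)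

lemma eventually_differentiableAt (hf : PiecewiseSmoothAt f c) (hfc : DifferentiableAt ℝ f c) :
    ∀ᶠ x in 𝓝 c, DifferentiableAt ℝ f x := by
  filter_upwards [eventually_nhdsWithin_iff.1 hf.eventually_contDiffAt] with x hx
  rcases eq_or_ne x c with rfl | hxc
  · exact hfc
  · exact (hx hxc).differentiableAt (by simp)

protected lemma deriv (hf : PiecewiseSmoothAt f c) (hfc : DifferentiableAt ℝ f c) :
    PiecewiseSmoothAt (deriv f) c := by
  filter_upwards [hf, eventually_Icc_subset_of_mem_nhds (hf.eventually_differentiableAt hfc),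
    self_mem_nhdsWithin] with δ ⟨hl, hr⟩ hdiff hδ
  replace hδ : 0 < δ := hδ
  have hUl : UniqueDiffOn ℝ (Icc (c - δ) c) := uniqueDiffOn_Icc (by linarith)
  have hUr : UniqueDiffOn ℝ (Icc c (c + δ)) := uniqueDiffOn_Icc (by linarith)
  exact ⟨(hl.derivWithin hUl (by simp)).congr fun x hx =>
      ((hdiff ⟨hx.1, by linarith [hx.2]⟩).derivWithin (hUl x hx)).symm,
    (hr.derivWithin hUr (by simp)).congr fun x hx =>
      ((hdiff ⟨by linarith [hx.1], hx.2⟩).derivWithin (hUr x hx)).symm⟩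

lemma contDiffAt_one (hf : PiecewiseSmoothAt f c) (hfc : DifferentiableAt ℝ f c) :
    ContDiffAt ℝ 1 f c := by
  obtain ⟨U, hU, hdiff, hcont⟩ : ∃ U ∈ 𝓝 c, (∀ x ∈ U, DifferentiableAt ℝ f x) ∧
      ∀ x ∈ U, ContinuousAt (deriv f) x :=
    ⟨_, (hf.eventually_differentiableAt hfc).and (hf.deriv hfc).eventually_continuousAt,
      fun _ hx => hx.1, fun _ hx => hx.2⟩
  refine contDiffAt_one_iff.2 ⟨fun x => .toSpanSingleton ℝ (deriv f x), U, hU,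
    fun x hx => ?_, fun x hx => (hdiff x hx).hasDerivAt.hasFDerivAt⟩
  exact (((ContinuousLinearMap.toSpanSingletonCLE (𝕜 := ℝ) (E := ℝ)).continuous.continuousAt).comp
    (hcont x hx)).continuousWithinAt

lemma oneSidedSmoothAtPi (hf : PiecewiseSmoothAt f π) : OneSidedSmoothAtPi f := by
  obtain ⟨δ, ⟨hl, hr⟩, hδ⟩ := (hf.and self_mem_nhdsWithin).exists
  have hlt : π - δ < π := sub_lt_self π hδ
  have hgt : π < π + δ := lt_add_of_pos_right π hδ
  choose dp hdp using fun k =>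
    exists_tendsto_iteratedDeriv_of_contDiffOn_Icc hgt hr k (left_mem_Icc.2 hgt.le)
  choose dm hdm using fun k =>
    exists_tendsto_iteratedDeriv_of_contDiffOn_Icc hlt hl k (right_mem_Icc.2 hlt.le)
  exact ⟨dp, dm, fun k => ⟨nhdsWithin_Ioo_eq_nhdsGT hgt ▸ hdp k,
    nhdsWithin_Ioo_eq_nhdsLT hlt ▸ hdm k⟩⟩

end PiecewiseSmoothAt

lemma piecewiseSmoothAt_of_tendsto_iteratedDeriv {f : ℝ → ℝ} {c : ℝ} (hcont : ContinuousAt f c)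
    (hf : ∀ᶠ x in 𝓝[≠] c, ContDiffAt ℝ ∞ f x)
    (hright : ∀ k, ∃ d, Tendsto (iteratedDeriv k f) (𝓝[>] c) (𝓝 d))
    (hleft : ∀ k, ∃ d, Tendsto (iteratedDeriv k f) (𝓝[<] c) (𝓝 d)) :
    PiecewiseSmoothAt f c := by
  obtain ⟨δ, hδsub, hδ⟩ := ((eventually_Icc_subset_of_mem_nhds
    (eventually_nhdsWithin_iff.1 hf)).and self_mem_nhdsWithin).exists
  replace hδ : 0 < δ := hδ
  have hsmooth : ∀ x ∈ Icc (c - δ) (c + δ), x ≠ c → ContDiffAt ℝ ∞ f x := fun x hx => hδsub hx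
  have hcont' : ContinuousOn f (Icc (c - δ) (c + δ)) := fun x hx => by
    rcases eq_or_ne x c with rfl | hxc
    · exact hcont.continuousWithinAt
    · exact (hsmooth x hx hxc).continuousAt.continuousWithinAt
  have hlim : ∀ k (s : Set ℝ), ∀ x ∈ Icc (c - δ) (c + δ), x ≠ c →
      ∃ d, Tendsto (iteratedDeriv k f) (𝓝[s] x) (𝓝 d) := fun k s x hx hxc =>
    ⟨_, (differentiableAt_iteratedDeriv_of_contDiffAt
      (hsmooth x hx hxc) k).continuousAt.continuousWithinAt⟩
  have hsubl : Icc (c - δ) c ⊆ Icc (c - δ) (c + δ) := Icc_subset_Icc_right (by linarith)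
  have hsubr : Icc c (c + δ) ⊆ Icc (c - δ) (c + δ) := Icc_subset_Icc_left (by linarith)
  refine piecewiseSmoothAt_of_contDiffOn hδ
    (contDiffOn_Icc_of_tendsto_iteratedDeriv (by linarith) (hcont'.mono hsubl)
      (fun x hx => (hsmooth x (hsubl (Ioo_subset_Icc_self hx)) hx.2.ne).contDiffWithinAt)
      fun k x hx => ?_)
    (contDiffOn_Icc_of_tendsto_iteratedDeriv (by linarith) (hcont'.mono hsubr)
      (fun x hx => (hsmooth x (hsubr (Ioo_subset_Icc_self hx)) hx.1.ne').contDiffWithinAt)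
      fun k x hx => ?_)
  · rcases eq_or_ne x c with rfl | hxc
    · exact nhdsWithin_Ioo_eq_nhdsLT (sub_lt_self x hδ) ▸ hleft k
    · exact hlim k _ x (hsubl hx) hxc
  · rcases eq_or_ne x c with rfl | hxc
    · exact nhdsWithin_Ioo_eq_nhdsGT (lt_add_of_pos_right x hδ) ▸ hright k
    · exact hlim k _ x (hsubr hx) hxc

theorem PiecewiseSmoothAt.exists_linearization {F : ℝ → ℝ} {c μ : ℝ}
    (hF : PiecewiseSmoothAt F c) (hFc : F c = c) (hμ : HasDerivAt F μ c) (hμ0 : 0 < μ)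
    (hμ1 : μ < 1) :
    ∃ κ : ℝ → ℝ, PiecewiseSmoothAt κ c ∧ κ c = 0 ∧ HasDerivAt κ 1 c ∧
      ∀ᶠ x in 𝓝 c, κ (F x) = μ * κ x := by
  obtain ⟨δ, ⟨hl, hr⟩, hδ⟩ := (hF.and self_mem_nhdsWithin).exists
  replace hδ : 0 < δ := hδ
  obtain ⟨ρl, εl, hεl, htamel⟩ := exists_forall_isTameContraction (by linarith)
    (right_mem_Icc.2 (by linarith)) hFc hl hμ.hasDerivWithinAt hμ0 hμ1
  obtain ⟨ρr, εr, hεr, htamer⟩ := exists_forall_isTameContraction (by linarith)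
    (left_mem_Icc.2 (by linarith)) hFc hr hμ.hasDerivWithinAt hμ0 hμ1
  obtain ⟨η, hη, hηle⟩ : ∃ η > 0, η ≤ δ ∧ η ≤ εl ∧ η ≤ εr :=
    ⟨min δ (min εl εr), by positivity, by simp⟩
  have hL : IsTameContraction F ρl c (c - η) c := htamel _ _ (by linarith) le_rfl
    (by linarith) (right_mem_Icc.2 (by linarith)) (by linarith)
  have hR : IsTameContraction F ρr c c (c + η) := htamer _ _ le_rfl (by linarith)
    (by linarith) (left_mem_Icc.2 (by linarith)) (by linarith)
  obtain ⟨κl, hκl, hκlc, hκl', hκleq⟩ := hL.exists_linearization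
  obtain ⟨κr, hκr, hκrc, hκr', hκreq⟩ := hR.exists_linearization
  rw [hμ.hasDerivWithinAt.derivWithin (hL.uniqueDiffOn c hL.mem)] at hκleq
  rw [hμ.hasDerivWithinAt.derivWithin (hR.uniqueDiffOn c hR.mem)] at hκreq
  have hκc : κl c = κr c := hκlc.trans hκrc.symm
  refine ⟨fun x => if x ≤ c then κl x else κr x, piecewiseSmoothAt_ite hη hκl hκr hκc,
    by simpa using hκlc, hasDerivAt_ite (hκl'.mono_of_mem_nhdsWithin (Icc_mem_nhdsLE hL.lt))
      (hκr'.mono_of_mem_nhdsWithin (Icc_mem_nhdsGE hR.lt)) hκc, ?_⟩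
  filter_upwards [Icc_mem_nhds hL.lt hR.lt] with x hx
  rcases le_or_gt x c with hxc | hcx
  · simp only [hxc, (hL.mapsTo ⟨hx.1, hxc⟩).2, if_true, hκleq x ⟨hx.1, hxc⟩]
  · rw [if_neg hcx.not_ge, ← hκreq x ⟨hcx.le, hx.2⟩]
    rcases (hR.mapsTo ⟨hcx.le, hx.2⟩).1.eq_or_lt with hFx | hFx
    · rw [← hFx, if_pos le_rfl, hκc]
    · rw [if_neg hFx.not_ge]

end PiecewiseSmooth

section Cutoff

open Set Filter Topology
open scoped ContDiff

/-- A smooth function on `ℝ` with values in `[0, 1]`, equal to `1` on `[-1, 1]` and to `0` outside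
`(-2, 2)`. -/
noncomputable def unitBump : ContDiffBump (0 : ℝ) := ⟨1, 2, one_pos, one_lt_two⟩

/-- `H` multiplied by a smooth bump at scale `δ` around `c`: it agrees with `H` within distance `δ`
of `c` and vanishes at distance at least `2 * δ`. -/
noncomputable def cutoff (H : ℝ → ℝ) (c δ x : ℝ) : ℝ := unitBump ((x - c) / δ) * H x

lemma exists_abs_deriv_unitBump_le : ∃ C, ∀ y, |deriv unitBump y| ≤ C :=
  (unitBump.hasCompactSupport.deriv.exists_bound_of_continuous
    ((unitBump.contDiff (n := 1)).continuous_deriv le_rfl))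

variable {H : ℝ → ℝ} {c δ x : ℝ}

lemma cutoff_eq_self (hδ : 0 < δ) (hx : |x - c| ≤ δ) : cutoff H c δ x = H x := by
  have hone : unitBump ((x - c) / δ) = 1 := unitBump.one_of_mem_closedBall <| by
    simpa [unitBump, Real.dist_eq, abs_div, abs_of_pos hδ] using (div_le_one hδ).2 hx
  rw [cutoff, hone, one_mul]

lemma cutoff_eq_zero (hδ : 0 < δ) (hx : 2 * δ ≤ |x - c|) : cutoff H c δ x = 0 := by
  have hzero : unitBump ((x - c) / δ) = 0 := unitBump.zero_of_le_dist <| by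
    simpa [unitBump, Real.dist_eq, abs_div, abs_of_pos hδ] using (le_div_iff₀ hδ).2 hx
  rw [cutoff, hzero, zero_mul]

lemma cutoff_eventuallyEq_self (hδ : 0 < δ) : cutoff H c δ =ᶠ[𝓝 c] H := by
  filter_upwards [Metric.closedBall_mem_nhds c hδ] with x hx using cutoff_eq_self hδ hx

lemma cutoff_eventuallyEq_zero (hδ : 0 < δ) (hx : 2 * δ < |x - c|) :
    cutoff H c δ =ᶠ[𝓝 x] fun _ => 0 := by
  have hcont : Continuous fun y : ℝ => |y - c| := by fun_prop
  filter_upwards [hcont.continuousAt.eventually (lt_mem_nhds hx)] with y hy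
  exact cutoff_eq_zero hδ hy.le

lemma contDiffAt_cutoff {n : ℕ∞} (hδ : 0 < δ) (hH : |x - c| ≤ 2 * δ → ContDiffAt ℝ n H x) :
    ContDiffAt ℝ n (cutoff H c δ) x := by
  rcases le_or_gt |x - c| (2 * δ) with hx | hx
  · have hscale : ContDiff ℝ n fun y : ℝ => unitBump ((y - c) / δ) :=
      unitBump.contDiff.comp ((contDiff_id.sub contDiff_const).div_const δ)
    exact hscale.contDiffAt.mul (hH hx)
  · exact contDiffAt_const.congr_of_eventuallyEq (cutoff_eventuallyEq_zero hδ hx)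

lemma hasDerivAt_cutoff {H' : ℝ} (hH : HasDerivAt H H' x) :
    HasDerivAt (cutoff H c δ)
      (deriv unitBump ((x - c) / δ) * (1 / δ) * H x + unitBump ((x - c) / δ) * H') x := by
  have hscale : HasDerivAt (fun y : ℝ => (y - c) / δ) (1 / δ) x :=
    ((hasDerivAt_id x).sub_const c).div_const δ
  have hbump : HasDerivAt unitBump (deriv unitBump ((x - c) / δ)) ((x - c) / δ) :=
    ((unitBump.contDiff (n := 1)).differentiable one_ne_zero _).hasDerivAt
  exact (hbump.comp x hscale).mul hH

-- The factor `1 / δ` from differentiating the bump is absorbed by `|H| ≤ 4 * δ * η`.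
lemma abs_deriv_cutoff_le {C η : ℝ} (hC : ∀ y, |deriv unitBump y| ≤ C) (hδ : 0 < δ)
    (hHc : H c = 0) (hdiff : ∀ y ∈ Icc (c - 2 * δ) (c + 2 * δ), DifferentiableAt ℝ H y)
    (hH' : ∀ y ∈ Icc (c - 2 * δ) (c + 2 * δ), |deriv H y| ≤ η) (x : ℝ) :
    |deriv (cutoff H c δ) x| ≤ (4 * C + 1) * η := by
  have hC0 : 0 ≤ C := (abs_nonneg _).trans (hC 0)
  have hc : c ∈ Icc (c - 2 * δ) (c + 2 * δ) := ⟨by linarith, by linarith⟩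
  have hη : 0 ≤ η := (abs_nonneg _).trans (hH' c hc)
  rcases le_or_gt |x - c| (2 * δ) with hx | hx
  · have hxI : x ∈ Icc (c - 2 * δ) (c + 2 * δ) := by rwa [← Real.closedBall_eq_Icc]
    have hHx : |H x| ≤ η * (4 * δ) :=
      (abs_le_of_abs_deriv_le_of_eq_zero hc hHc
        (fun y hy => (hdiff y hy).hasDerivAt.hasDerivWithinAt) hH' x hxI).trans_eq (by ring)
    have hbump : |unitBump ((x - c) / δ)| ≤ 1 := by
      rw [abs_of_nonneg unitBump.nonneg]; exact unitBump.le_one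
    rw [(hasDerivAt_cutoff (hdiff x hxI).hasDerivAt).deriv]
    calc |deriv unitBump ((x - c) / δ) * (1 / δ) * H x + unitBump ((x - c) / δ) * deriv H x|
        ≤ |deriv unitBump ((x - c) / δ)| * (1 / δ) * |H x|
            + |unitBump ((x - c) / δ)| * |deriv H x| := by
          refine (abs_add_le _ _).trans_eq ?_
          rw [abs_mul, abs_mul, abs_mul, abs_of_pos (one_div_pos.2 hδ)]
      _ ≤ C * (1 / δ) * (η * (4 * δ)) + 1 * η := by
          gcongr
          exacts [hC _, hH' x hxI]
      _ = (4 * C + 1) * η := by field_simp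
  · rw [(cutoff_eventuallyEq_zero hδ hx).deriv_eq, deriv_const, abs_zero]
    positivity

lemma eventually_abs_deriv_cutoff_lt (hH : ContDiffAt ℝ 1 H c) (hHc : H c = 0)
    (hH'c : deriv H c = 0) {ε : ℝ} (hε : 0 < ε) :
    ∀ᶠ δ in 𝓝[>] (0 : ℝ), ∀ x, |deriv (cutoff H c δ) x| < ε := by
  obtain ⟨C, hC⟩ := exists_abs_deriv_unitBump_le
  have hC0 : 0 ≤ C := (abs_nonneg _).trans (hC 0)
  have hη : 0 < ε / (2 * (4 * C + 1)) := by positivity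
  have hsmall : ∀ᶠ y in 𝓝 c, DifferentiableAt ℝ H y ∧ |deriv H y| ≤ ε / (2 * (4 * C + 1)) := by
    have hcont : ContinuousAt (fun y => |deriv H y|) c :=
      (hH.derivWithin (by simp) (m := 0)).continuousAt.abs
    filter_upwards [(hH.eventually (by simp)), hcont.eventually (ge_mem_nhds (by simpa [hH'c]))]
      with y hy hy' using ⟨hy.differentiableAt one_ne_zero, hy'⟩
  have hdouble : Tendsto (fun δ : ℝ => 2 * δ) (𝓝[>] 0) (𝓝[>] 0) := by
    refine tendsto_nhdsWithin_iff.2 ⟨?_, ?_⟩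
    · exact ((continuous_const_mul 2).tendsto' 0 0 (mul_zero 2)).mono_left nhdsWithin_le_nhds
    · filter_upwards [self_mem_nhdsWithin] with δ hδ using mul_pos two_pos (mem_Ioi.1 hδ)
  filter_upwards [hdouble.eventually (eventually_Icc_subset_of_mem_nhds hsmall),
    self_mem_nhdsWithin] with δ hsub hδ x
  calc |deriv (cutoff H c δ) x| ≤ (4 * C + 1) * (ε / (2 * (4 * C + 1))) :=
        abs_deriv_cutoff_le hC hδ hHc (fun y hy => (hsub hy).1) (fun y hy => (hsub hy).2) x
    _ = ε / 2 := by field_simp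
    _ < ε := half_lt_self hε

end Cutoff

section Periodization

open Set Filter Topology
open scoped ContDiff

/-- The `P`-periodic function which agrees with `H` on the period centred at `c`:
`x - P * round ((x - c) / P)` is the translate of `x` by a multiple of `P` closest to `c`. -/
noncomputable def periodization (H : ℝ → ℝ) (c P x : ℝ) : ℝ := H (x - P * round ((x - c) / P))

variable {H : ℝ → ℝ} {c P r : ℝ}

lemma periodization_periodic (hP : P ≠ 0) : Function.Periodic (periodization H c P) P := by
  intro x
  have hdiv : (x + P - c) / P = (x - c) / P + 1 := by field_simp; ring
  simp only [periodization, hdiv, round_add_one, Int.cast_add, Int.cast_one]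
  congr 1; ring

lemma abs_sub_mul_round_sub_le (hP : 0 < P) (x : ℝ) :
    |x - P * round ((x - c) / P) - c| ≤ P / 2 := by
  have hfactor : x - P * round ((x - c) / P) - c = P * ((x - c) / P - round ((x - c) / P)) := by
    field_simp; ring
  rw [hfactor, abs_mul, abs_of_pos hP]
  linarith [mul_le_mul_of_nonneg_left (abs_sub_round ((x - c) / P)) hP.le]

lemma periodization_eq (hP : 0 < P) (hr : r ≤ P / 2) (hH : ∀ x, r ≤ |x - c| → H x = 0)
    {m : ℤ} {x : ℝ} (hx : |x - P * m - c| < P - r) : periodization H c P x = H (x - P * m) := by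
  have hround := abs_sub_mul_round_sub_le (c := c) hP x
  rw [periodization]
  generalize round ((x - c) / P) = n at hround ⊢
  rcases eq_or_ne n m with rfl | hnm
  · rfl
  have hsep : P ≤ |x - P * n - c| + |x - P * m - c| := by
    have hone : (1 : ℝ) ≤ |(n - m : ℤ)| := by exact_mod_cast Int.one_le_abs (sub_ne_zero.2 hnm)
    calc P ≤ P * |((n - m : ℤ) : ℝ)| := le_mul_of_one_le_right hP.le (by exact_mod_cast hone)
      _ = |(x - P * m - c) - (x - P * n - c)| := by
          rw [← abs_of_pos hP, ← abs_mul, abs_of_pos hP]; push_cast; congr 1; ring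
      _ ≤ |x - P * n - c| + |x - P * m - c| := by
          rw [add_comm]; exact abs_sub _ _
  rw [hH _ (by linarith), hH _ (hr.trans (by linarith))]

lemma exists_periodization_eventuallyEq (hP : 0 < P) (hr : r < P / 2)
    (hH : ∀ x, r ≤ |x - c| → H x = 0) (x : ℝ) :
    ∃ m : ℤ, periodization H c P =ᶠ[𝓝 x] fun y => H (y - P * m) := by
  refine ⟨round ((x - c) / P), ?_⟩
  have hcont : Continuous fun y : ℝ => |y - P * round ((x - c) / P) - c| := by fun_prop
  have hlt : |x - P * round ((x - c) / P) - c| < P - r := by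
    linarith [abs_sub_mul_round_sub_le (c := c) hP x]
  filter_upwards [hcont.continuousAt.eventually (gt_mem_nhds hlt)] with y hy
  exact periodization_eq hP hr.le hH hy

lemma periodization_eventuallyEq_self (hP : 0 < P) (hr : r < P / 2)
    (hH : ∀ x, r ≤ |x - c| → H x = 0) : periodization H c P =ᶠ[𝓝 c] H := by
  filter_upwards [Metric.ball_mem_nhds c (show 0 < P - r by linarith)] with x hx
  have hx : |x - c| < P - r := hx
  simpa using periodization_eq (m := 0) hP hr.le hH (by simpa using hx)

end Periodization

section CircleLifts

open Set Filter Topology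
open scoped ContDiff

/-- The real line without the orbit of `c` under translation by the period `P`, that is, the
preimage of the circle `ℝ / Pℤ` punctured at the class of `c`. -/
def regularPoints (c P : ℝ) : Set ℝ := {θ | ∀ m : ℤ, θ ≠ c + P * m}

variable {c P : ℝ} {f : ℝ → ℝ}

lemma isOpen_regularPoints (hP : P ≠ 0) : IsOpen (regularPoints c P) := by
  have hpre : regularPoints c P = (fun θ : ℝ => (θ - c) / P) ⁻¹' (range ((↑) : ℤ → ℝ))ᶜ := by
    ext θ
    simp only [regularPoints, mem_ofPred_eq, mem_preimage, mem_compl_iff, mem_range, not_exists,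
      eq_div_iff hP]
    exact forall_congr' fun m => not_congr ⟨fun h => by rw [h]; ring, fun h => by linarith⟩
  rw [hpre]
  exact Int.isClosedEmbedding_coe_real.isClosed_range.isOpen_compl.preimage (by fun_prop)

lemma eventually_mem_regularPoints (hP : 0 < P) : ∀ᶠ x in 𝓝[≠] c, x ∈ regularPoints c P := by
  have hball : ∀ᶠ x in 𝓝[≠] c, |x - c| < P := nhdsWithin_le_nhds (Metric.ball_mem_nhds c hP)
  filter_upwards [hball, self_mem_nhdsWithin] with x hx hxc
  rintro m rfl
  rw [add_sub_cancel_left, abs_mul, abs_of_pos hP, mul_lt_iff_lt_one_right hP] at hx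
  have hm : m = 0 := Int.abs_lt_one_iff.1 (by exact_mod_cast hx)
  exact hxc (by simp [hm])

lemma map_add_mul_intCast {Q : ℝ} (hf : ∀ θ, f (θ + P) = f θ + Q) (θ : ℝ) (m : ℤ) :
    f (θ + P * m) = f θ + Q * m := by
  simpa [mul_comm] using AddConstMapClass.map_add_zsmul (⟨f, hf⟩ : AddConstMap ℝ ℝ P Q) θ m

lemma contDiff_of_contDiffOn_regularPoints {n : WithTop ℕ∞} {Q : ℝ} (hP : P ≠ 0)
    (hf : ∀ θ, f (θ + P) = f θ + Q) (hreg : ContDiffOn ℝ n f (regularPoints c P))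
    (hc : ContDiffAt ℝ n f c) : ContDiff ℝ n f := by
  refine contDiff_iff_contDiffAt.2 fun θ => ?_
  by_cases hθ : θ ∈ regularPoints c P
  · exact hreg.contDiffAt ((isOpen_regularPoints hP).mem_nhds hθ)
  · simp only [regularPoints, mem_ofPred_eq, not_forall, not_not] at hθ
    obtain ⟨m, rfl⟩ := hθ
    have hshift : f = fun x => f (x - P * m) + Q * m := by
      funext x
      rw [← map_add_mul_intCast hf, sub_add_cancel]
    rw [hshift]
    have hc : ContDiffAt ℝ n f (c + P * m - P * m) := by rwa [add_sub_cancel_right]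
    exact (hc.comp (c + P * m) (contDiffAt_id.sub contDiffAt_const)).add contDiffAt_const

lemma map_mem_regularPoints (hinj : Function.Injective f) (hf : ∀ θ, f (θ + P) = f θ + P)
    (hfc : f c = c) {θ : ℝ} (hθ : θ ∈ regularPoints c P) : f θ ∈ regularPoints c P := by
  intro m hm
  exact hθ m (hinj (by rw [hm, map_add_mul_intCast hf, hfc]))

lemma surjective_of_map_add_period (hP : 0 < P) (hcont : Continuous f)
    (hf : ∀ θ, f (θ + P) = f θ + P) : Function.Surjective f := by
  intro y
  obtain ⟨m, hm⟩ := exists_int_gt ((y - f 0) / P)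
  obtain ⟨n, hn⟩ := exists_int_lt ((y - f 0) / P)
  rw [div_lt_iff₀ hP] at hm
  rw [lt_div_iff₀ hP] at hn
  refine mem_range_of_exists_le_of_exists_ge hcont ⟨0 + P * n, ?_⟩ ⟨0 + P * m, ?_⟩
  · rw [map_add_mul_intCast hf]; linarith
  · rw [map_add_mul_intCast hf]; linarith

/-- `K` lifts an orientation-preserving `C¹` diffeomorphism of the circle `ℝ / Pℤ` with
nonvanishing derivative which fixes the class of `c`, is smooth elsewhere, and is smooth up to `c`
on either side. -/
structure IsPiecewiseSmoothLift (K : ℝ → ℝ) (c P : ℝ) : Prop where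
  contDiff : ContDiff ℝ 1 K
  deriv_pos : ∀ θ, 0 < deriv K θ
  map_add_period : ∀ θ, K (θ + P) = K θ + P
  map_self : K c = c
  contDiffOn : ContDiffOn ℝ ∞ K (regularPoints c P)
  piecewiseSmoothAt : PiecewiseSmoothAt K c

lemma isPiecewiseSmoothLift_periodization_add_id {G : ℝ → ℝ} {r : ℝ} (hP : 0 < P)
    (hr : r < P / 2) (hvanish : ∀ x, r ≤ |x - c| → G x = 0) (hG : ContDiff ℝ 1 G)
    (hG' : ∀ x, |deriv G x| < 1) (hsmooth : ∀ x, x ≠ c → ContDiffAt ℝ ∞ G x) (hGc : G c = 0)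
    (hpws : PiecewiseSmoothAt G c) :
    IsPiecewiseSmoothLift (fun x => periodization G c P x + x) c P := by
  have hloc := exists_periodization_eventuallyEq hP hr hvanish
  have hshift (n : WithTop ℕ∞) {θ : ℝ} (m : ℤ) (h : ContDiffAt ℝ n G (θ - P * m)) :
      ContDiffAt ℝ n (fun y => G (y - P * m)) θ :=
    h.comp θ (contDiffAt_id.sub contDiffAt_const)
  have hself := periodization_eventuallyEq_self hP hr hvanish
  have hcontDiff : ContDiff ℝ 1 (periodization G c P) := contDiff_iff_contDiffAt.2 fun θ => by
    obtain ⟨m, hm⟩ := hloc θ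
    exact (hshift 1 m hG.contDiffAt).congr_of_eventuallyEq hm
  refine ⟨hcontDiff.add contDiff_id, fun θ => ?_, fun θ => ?_, ?_, fun θ hθ => ?_, ?_⟩
  · obtain ⟨m, hm⟩ := hloc θ
    rw [deriv_fun_add (hcontDiff.differentiable one_ne_zero θ) differentiableAt_fun_id, deriv_id'',
      hm.deriv_eq, deriv_comp_sub_const]
    linarith [(abs_lt.1 (hG' (θ - P * m))).1]
  · rw [periodization_periodic hP.ne', add_assoc]
  · rw [hself.self_of_nhds, hGc, zero_add]
  · obtain ⟨m, hm⟩ := hloc θ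
    have hne : θ - P * m ≠ c := fun h => hθ m (by linarith)
    exact ((hshift ∞ m (hsmooth _ hne)).congr_of_eventuallyEq hm).contDiffWithinAt.add
      contDiffWithinAt_id
  · exact (hpws.congr_of_eventuallyEq hself).add_contDiff contDiff_id

lemma PiecewiseSmoothAt.exists_cutoff {H : ℝ → ℝ} {r : ℝ} (hH : PiecewiseSmoothAt H c)
    (hHc : H c = 0) (hH' : HasDerivAt H 0 c) (hr : 0 < r) :
    ∃ G : ℝ → ℝ, G =ᶠ[𝓝 c] H ∧ (∀ x, r ≤ |x - c| → G x = 0) ∧ ContDiff ℝ 1 G ∧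
      (∀ x, |deriv G x| < 1) ∧ ∀ x, x ≠ c → ContDiffAt ℝ ∞ G x := by
  have hC1 : ContDiffAt ℝ 1 H c := hH.contDiffAt_one hH'.differentiableAt
  obtain ⟨ρ, ⟨hsmooth, hsmall⟩, hρ⟩ := (((eventually_Icc_subset_of_mem_nhds
    (eventually_nhdsWithin_iff.1 hH.eventually_contDiffAt)).and
      (Ioo_mem_nhdsGT hr)).and self_mem_nhdsWithin).exists
  obtain ⟨δ, ⟨hδ', hδρ⟩, hδ⟩ := (((eventually_abs_deriv_cutoff_lt hC1 hHc hH'.deriv one_pos).and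
    (Ioo_mem_nhdsGT (half_pos (mem_Ioi.1 hρ)))).and self_mem_nhdsWithin).exists
  replace hδ : 0 < δ := hδ
  have hHx : ∀ x, |x - c| ≤ 2 * δ → x ≠ c → ContDiffAt ℝ ∞ H x := fun x hx =>
    hsmooth (Real.closedBall_eq_Icc ▸ hx.trans (by linarith [hδρ.2]))
  refine ⟨cutoff H c δ, cutoff_eventuallyEq_self hδ,
    fun x hx => cutoff_eq_zero hδ (by linarith [hδρ.2, hsmall.2]),
    contDiff_iff_contDiffAt.2 fun x => contDiffAt_cutoff (n := 1) hδ fun hx => ?_, hδ',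
    fun x hxc => contDiffAt_cutoff (n := ⊤) hδ fun hx => hHx x hx hxc⟩
  rcases eq_or_ne x c with rfl | hxc
  · exact hC1
  · exact (hHx x hx hxc).of_le (by simp)

-- A cutoff of `k x - x` at a small scale has derivative less than `1` in absolute value, so adding
-- its periodization to `x` keeps the derivative positive.
theorem PiecewiseSmoothAt.exists_isPiecewiseSmoothLift {k : ℝ → ℝ} (hP : 0 < P)
    (hk : PiecewiseSmoothAt k c) (hkc : k c = c) (hk' : HasDerivAt k 1 c) :
    ∃ K, IsPiecewiseSmoothLift K c P ∧ K =ᶠ[𝓝 c] k := by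
  have hH' : HasDerivAt (fun x => k x + -x) 0 c := by
    simpa using hk'.fun_add (hasDerivAt_neg c)
  obtain ⟨G, hGH, hvanish, hG, hG', hsmooth⟩ :=
    (hk.add_contDiff contDiff_neg).exists_cutoff (by rw [hkc, add_neg_cancel]) hH'
      (show 0 < P / 3 by positivity)
  have hGc : G c = 0 := by simp [hGH.self_of_nhds, hkc]
  have hr : P / 3 < P / 2 := by linarith
  refine ⟨_, isPiecewiseSmoothLift_periodization_add_id hP hr hvanish hG hG' hsmooth hGc
    ((hk.add_contDiff contDiff_neg).congr_of_eventuallyEq hGH), ?_⟩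
  filter_upwards [periodization_eventuallyEq_self hP hr hvanish, hGH] with x hx hGx
  rw [hx, hGx, neg_add_cancel_right]

namespace IsPiecewiseSmoothLift

variable {K : ℝ → ℝ}

lemma hasDerivAt (hK : IsPiecewiseSmoothLift K c P) (θ : ℝ) : HasDerivAt K (deriv K θ) θ :=
  (hK.contDiff.differentiable one_ne_zero θ).hasDerivAt

lemma strictMono (hK : IsPiecewiseSmoothLift K c P) : StrictMono K :=
  strictMono_of_deriv_pos hK.deriv_pos

lemma contDiffAt (hK : IsPiecewiseSmoothLift K c P) (hP : P ≠ 0) {θ : ℝ}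
    (hθ : θ ∈ regularPoints c P) : ContDiffAt ℝ ∞ K θ :=
  hK.contDiffOn.contDiffAt ((isOpen_regularPoints hP).mem_nhds hθ)

lemma deriv_add_period (hK : IsPiecewiseSmoothLift K c P) (θ : ℝ) :
    deriv K (θ + P) = deriv K θ := by
  rw [← deriv_comp_add_const]
  simp only [hK.map_add_period, deriv_add_const]

/-- A lift of a circle diffeomorphism, as a homeomorphism of the line. -/
noncomputable def homeomorph (hK : IsPiecewiseSmoothLift K c P) (hP : 0 < P) : ℝ ≃ₜ ℝ :=
  (hK.strictMono.orderIsoOfSurjective K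
    (surjective_of_map_add_period hP hK.contDiff.continuous hK.map_add_period)).toHomeomorph

variable (hK : IsPiecewiseSmoothLift K c P) (hP : 0 < P)

lemma apply_homeomorph_symm (y : ℝ) : K ((hK.homeomorph hP).symm y) = y :=
  (hK.homeomorph hP).apply_symm_apply y

lemma homeomorph_symm_apply (x : ℝ) : (hK.homeomorph hP).symm (K x) = x :=
  (hK.homeomorph hP).symm_apply_apply x

lemma strictMono_homeomorph_symm : StrictMono (hK.homeomorph hP).symm := fun x y hxy => by
  rwa [← hK.strictMono.lt_iff_lt, hK.apply_homeomorph_symm, hK.apply_homeomorph_symm]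

lemma homeomorph_symm_add_period (y : ℝ) :
    (hK.homeomorph hP).symm (y + P) = (hK.homeomorph hP).symm y + P :=
  hK.strictMono.injective <| by
    rw [hK.apply_homeomorph_symm, hK.map_add_period, hK.apply_homeomorph_symm]

lemma homeomorph_symm_self : (hK.homeomorph hP).symm c = c :=
  hK.strictMono.injective <| by rw [hK.apply_homeomorph_symm, hK.map_self]

lemma hasDerivAt_homeomorph_symm (y : ℝ) :
    HasDerivAt (hK.homeomorph hP).symm (deriv K ((hK.homeomorph hP).symm y))⁻¹ y :=
  .of_local_left_inverse (hK.homeomorph hP).symm.continuous.continuousAt (hK.hasDerivAt _)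
    (hK.deriv_pos _).ne' (.of_forall (hK.apply_homeomorph_symm hP))

lemma contDiffAt_homeomorph_symm {y : ℝ} (hy : y ∈ regularPoints c P) :
    ContDiffAt ℝ ∞ (hK.homeomorph hP).symm y :=
  (hK.homeomorph hP).toOpenPartialHomeomorph.contDiffAt_symm_deriv (hK.deriv_pos _).ne' trivial
    (hK.hasDerivAt _) <| hK.contDiffAt hP.ne' <|
      map_mem_regularPoints (hK.strictMono_homeomorph_symm hP).injective
        (hK.homeomorph_symm_add_period hP) (hK.homeomorph_symm_self hP) hy

end IsPiecewiseSmoothLift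

end CircleLifts

section PullbackField

open Set Filter Topology
open scoped ContDiff

/-- The pullback under `K` of the vector field `X` on the line; where `K` is invertible it is the
field whose flow is conjugate to that of `X` by `K`. -/
noncomputable def pullbackField (K X : ℝ → ℝ) (θ : ℝ) : ℝ := X (K θ) / deriv K θ

lemma hasDerivAt_div_of_eq_zero {u v : ℝ → ℝ} {u' c : ℝ} (hu : HasDerivAt u u' c) (huc : u c = 0)
    (hv : ContinuousAt v c) (hvc : v c ≠ 0) : HasDerivAt (fun x => u x / v x) (u' / v c) c := by
  rw [hasDerivAt_iff_tendsto_slope] at hu ⊢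
  refine (hu.div (hv.mono_left nhdsWithin_le_nhds) hvc).congr fun x => ?_
  simp only [slope_def_field, huc, zero_div, sub_zero, Pi.div_apply]
  ring

namespace IsPiecewiseSmoothLift

variable {K X : ℝ → ℝ} {c P : ℝ}

lemma pullbackField_periodic (hK : IsPiecewiseSmoothLift K c P) (hX : Function.Periodic X P) :
    Function.Periodic (pullbackField K X) P := fun θ => by
  simp only [pullbackField, hK.map_add_period, hK.deriv_add_period, hX (K θ)]

lemma contDiffOn_pullbackField (hK : IsPiecewiseSmoothLift K c P) (hP : P ≠ 0)
    (hX : ContDiff ℝ ∞ X) : ContDiffOn ℝ ∞ (pullbackField K X) (regularPoints c P) :=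
  (hX.comp_contDiffOn hK.contDiffOn).div
    (hK.contDiffOn.deriv_of_isOpen (isOpen_regularPoints hP) (by simp))
    fun θ _ => (hK.deriv_pos θ).ne'

lemma piecewiseSmoothAt_pullbackField (hK : IsPiecewiseSmoothLift K c P) (hX : ContDiff ℝ ∞ X) :
    PiecewiseSmoothAt (pullbackField K X) c :=
  (hK.piecewiseSmoothAt.contDiff_comp hX).div
    (hK.piecewiseSmoothAt.deriv (hK.hasDerivAt c).differentiableAt) (hK.deriv_pos c).ne'

-- `K` need not be twice differentiable at `c`; differentiability of the pullback there comes from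
-- the vanishing of `X` at `c`.
lemma contDiff_pullbackField (hK : IsPiecewiseSmoothLift K c P) (hP : P ≠ 0)
    (hX : ContDiff ℝ ∞ X) (hper : Function.Periodic X P) (hXc : X c = 0) :
    ContDiff ℝ 1 (pullbackField K X) := by
  have hXK : DifferentiableAt ℝ (fun θ => X (K θ)) c :=
    (hX.differentiable (by simp) (K c)).comp c (hK.hasDerivAt c).differentiableAt
  have hdiff : DifferentiableAt ℝ (pullbackField K X) c :=
    (hasDerivAt_div_of_eq_zero hXK.hasDerivAt (by rw [hK.map_self, hXc])
      (hK.contDiff.continuous_deriv le_rfl).continuousAt (hK.deriv_pos c).ne').differentiableAt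
  exact contDiff_of_contDiffOn_regularPoints (Q := 0) hP
    (fun θ => by rw [hK.pullbackField_periodic hper, add_zero])
    ((hK.contDiffOn_pullbackField hP hX).of_le (by simp))
    ((hK.piecewiseSmoothAt_pullbackField hX).contDiffAt_one hdiff)

lemma hasDerivAt_homeomorph_symm_integralCurve (hK : IsPiecewiseSmoothLift K c P) (hP : 0 < P)
    {σ : ℝ → ℝ} {t : ℝ} (hσ : HasDerivAt σ (X (σ t)) t) :
    HasDerivAt (fun s => (hK.homeomorph hP).symm (σ s))
      (pullbackField K X ((hK.homeomorph hP).symm (σ t))) t := by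
  refine ((hK.hasDerivAt_homeomorph_symm hP (σ t)).comp t hσ).congr_deriv ?_
  rw [pullbackField, hK.apply_homeomorph_symm, div_eq_inv_mul]

end IsPiecewiseSmoothLift

end PullbackField

section SinFlow

open Real Filter Topology
open scoped ContDiff

/-- The time-`t` map of the flow of the vector field `sin`, which satisfies
`tan (sinFlow t θ / 2) = exp t * tan (θ / 2)`; this form has no singularity at odd multiples
of `π`. -/
noncomputable def sinFlow (t θ : ℝ) : ℝ :=
  θ + 2 * arctan ((exp t - 1) * sin θ / ((1 + cos θ) + exp t * (1 - cos θ)))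

lemma one_add_cos_add_exp_mul_pos (t θ : ℝ) : 0 < (1 + cos θ) + exp t * (1 - cos θ) := by
  have hcos := neg_one_le_cos θ
  rcases eq_or_lt_of_le hcos with h | h
  · rw [← h]; nlinarith [exp_pos t]
  · linarith [mul_nonneg (exp_pos t).le (sub_nonneg.2 (cos_le_one θ))]

lemma sin_two_mul_arctan (z : ℝ) : sin (2 * arctan z) = 2 * z / (1 + z ^ 2) := by
  have hpos : 0 < 1 + z ^ 2 := by positivity
  have : 0 < √(1 + z ^ 2) := sqrt_pos.2 hpos
  rw [sin_two_mul, sin_arctan, cos_arctan]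
  field_simp
  rw [sq_sqrt hpos.le]

lemma cos_two_mul_arctan (z : ℝ) : cos (2 * arctan z) = (1 - z ^ 2) / (1 + z ^ 2) := by
  rw [cos_two_mul, cos_sq_arctan]
  field_simp
  ring

lemma hasDerivAt_sinFlow (t θ : ℝ) : HasDerivAt (fun s => sinFlow s θ) (sin (sinFlow t θ)) t := by
  have hden := one_add_cos_add_exp_mul_pos t θ
  have hnum' : HasDerivAt (fun s => (exp s - 1) * sin θ) (exp t * sin θ) t :=
    ((Real.hasDerivAt_exp t).sub_const 1).mul_const _
  have hden' : HasDerivAt (fun s => (1 + cos θ) + exp s * (1 - cos θ)) (exp t * (1 - cos θ)) t :=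
    ((Real.hasDerivAt_exp t).mul_const _).const_add _
  refine ((((hnum'.div hden' hden.ne').arctan).const_mul 2).const_add θ).congr_deriv ?_
  simp only [sinFlow, Pi.div_apply, sin_add, sin_two_mul_arctan, cos_two_mul_arctan]
  have hsq : sin θ ^ 2 = 1 - cos θ ^ 2 := sin_sq θ
  generalize sin θ = s at *
  generalize cos θ = c at *
  generalize exp t = e at *
  have : 0 < 1 + ((e - 1) * s / (1 + c + e * (1 - c))) ^ 2 := by positivity
  field_simp
  rw [← sub_eq_zero]
  ring_nf
  simp only [show s ^ 3 = s * s ^ 2 by ring, hsq]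
  ring

lemma sinFlow_zero (θ : ℝ) : sinFlow 0 θ = θ := by simp [sinFlow]

lemma integralCurve_sin_unique {x y : ℝ → ℝ} (hx : ∀ t, HasDerivAt x (sin (x t)) t)
    (hy : ∀ t, HasDerivAt y (sin (y t)) t) {t₀ : ℝ} (h : x t₀ = y t₀) : x = y := by
  have hlip : LipschitzWith 1 Real.sin :=
    lipschitzWith_of_nnnorm_deriv_le Real.differentiable_sin fun x => by
      rw [Real.deriv_sin, ← NNReal.coe_le_coe]
      simpa using Real.abs_cos_le_one x
  exact ODE_solution_unique_univ (v := fun _ x => sin x) (s := fun _ => Set.univ)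
    (fun _ => hlip.lipschitzOnWith) (fun t => ⟨hx t, trivial⟩) (fun t => ⟨hy t, trivial⟩) h

lemma sinFlow_sinFlow (s t θ : ℝ) : sinFlow s (sinFlow t θ) = sinFlow (s + t) θ :=
  congrFun (integralCurve_sin_unique (x := fun s => sinFlow s (sinFlow t θ))
    (y := fun s => sinFlow (s + t) θ) (t₀ := 0) (fun s => hasDerivAt_sinFlow s _)
    (fun s => (hasDerivAt_sinFlow (s + t) θ).comp_add_const s t) (by simp [sinFlow_zero])) s

-- `π + 2 * arctan y` linearizes the flow at its attracting fixed point `π`.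
lemma sinFlow_pi_add_two_mul_arctan (t y : ℝ) :
    sinFlow t (π + 2 * arctan y) = π + 2 * arctan (exp (-t) * y) := by
  refine congrFun (integralCurve_sin_unique (x := fun s => sinFlow s (π + 2 * arctan y))
    (y := fun s => π + 2 * arctan (exp (-s) * y)) (t₀ := 0) (fun s => hasDerivAt_sinFlow s _)
    (fun s => ?_) (by simp [sinFlow_zero])) t
  have hexp : HasDerivAt (fun s => exp (-s) * y) (exp (-s) * (-1) * y) s :=
    ((hasDerivAt_neg s).exp).mul_const y
  refine ((hexp.arctan.const_mul 2).const_add π).congr_deriv ?_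
  rw [add_comm π, sin_add_pi, sin_two_mul_arctan]
  ring

lemma sinFlow_pi (t : ℝ) : sinFlow t π = π := by simp [sinFlow]

lemma sinFlow_add_two_pi (t θ : ℝ) : sinFlow t (θ + 2 * π) = sinFlow t θ + 2 * π := by
  simp only [sinFlow, sin_add_two_pi, cos_add_two_pi]; ring

lemma contDiff_sinFlow (t : ℝ) : ContDiff ℝ ∞ (sinFlow t) := by
  have hquot : ContDiff ℝ ∞ fun θ =>
      (exp t - 1) * sin θ / ((1 + cos θ) + exp t * (1 - cos θ)) :=
    ContDiff.div (by fun_prop) (by fun_prop) fun θ => (one_add_cos_add_exp_mul_pos t θ).ne'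
  exact contDiff_id.add (contDiff_const.mul hquot.arctan)

lemma bijective_sinFlow (t : ℝ) : Function.Bijective (sinFlow t) :=
  Function.bijective_iff_has_inverse.2 ⟨sinFlow (-t),
    fun θ => by simp [sinFlow_sinFlow, sinFlow_zero],
    fun θ => by simp [sinFlow_sinFlow, sinFlow_zero]⟩

lemma strictMono_sinFlow (t : ℝ) : StrictMono (sinFlow t) := by
  rcases (contDiff_sinFlow t).continuous.strictMono_of_inj (bijective_sinFlow t).1 with h | h
  · exact h
  · have hlt := h (show (0 : ℝ) < 0 + 2 * π by positivity)
    rw [sinFlow_add_two_pi] at hlt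
    linarith [pi_pos]

lemma hasDerivAt_sinFlow_pi (t : ℝ) : HasDerivAt (sinFlow t) (exp (-t)) π := by
  have hnum : HasDerivAt (fun θ => (exp t - 1) * sin θ) ((exp t - 1) * cos π) π :=
    (hasDerivAt_sin π).const_mul _
  have hquot := hasDerivAt_div_of_eq_zero hnum (by simp)
    (v := fun θ => (1 + cos θ) + exp t * (1 - cos θ)) (by fun_prop)
    (one_add_cos_add_exp_mul_pos t π).ne'
  refine ((hasDerivAt_id π).add (hquot.arctan.const_mul 2)).congr_deriv ?_
  simp only [sin_pi, mul_zero, cos_pi, add_neg_cancel, sub_neg_eq_add, zero_add, zero_div, ne_eq,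
    OfNat.ofNat_ne_zero, not_false_eq_true, zero_pow, add_zero, one_ne_zero, div_self, mul_neg,
    mul_one, neg_sub, one_mul, exp_neg]
  field_simp
  ring

lemma PiecewiseSmoothAt.exists_conj_sinFlow {F : ℝ → ℝ} {t : ℝ} (ht : 0 < t)
    (hF : PiecewiseSmoothAt F π) (hFπ : F π = π) (hF' : HasDerivAt F (exp (-t)) π) :
    ∃ K, IsPiecewiseSmoothLift K π (2 * π) ∧ ∀ᶠ x in 𝓝 π, K (F x) = sinFlow t (K x) := by
  obtain ⟨κ, hκ, hκπ, hκ', hκF⟩ :=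
    hF.exists_linearization hFπ hF' (exp_pos _) (by simpa using ht)
  have hchart : ContDiff ℝ ∞ fun y : ℝ => π + 2 * arctan (y / 2) :=
    contDiff_const.add (contDiff_const.mul (contDiff_id.div_const 2).arctan)
  have hk' : HasDerivAt (fun x => π + 2 * arctan (κ x / 2)) 1 π := by
    simpa [hκπ] using ((hκ'.div_const 2).arctan.const_mul 2).const_add π
  obtain ⟨K, hK, hKk⟩ := (hκ.contDiff_comp hchart).exists_isPiecewiseSmoothLift
    (P := 2 * π) (by positivity) (by simp [hκπ]) hk'
  have htendsto : Tendsto F (𝓝 π) (𝓝 π) := by simpa [ContinuousAt, hFπ] using hF'.continuousAt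
  refine ⟨K, hK, ?_⟩
  filter_upwards [hκF, hKk, htendsto.eventually hKk] with x hx hKx hKFx
  rw [hKFx, hKx, sinFlow_pi_add_two_mul_arctan, hx, mul_div_assoc]

namespace IsPiecewiseSmoothLift

variable {K : ℝ → ℝ}

/-- The flow of `pullbackField K sin`: the flow of `sin` conjugated by `K`. -/
noncomputable def conjSinFlow (hK : IsPiecewiseSmoothLift K π (2 * π)) (t θ : ℝ) : ℝ :=
  (hK.homeomorph two_pi_pos).symm (sinFlow t (K θ))

variable (hK : IsPiecewiseSmoothLift K π (2 * π))

lemma hasDerivAt_conjSinFlow (t θ : ℝ) :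
    HasDerivAt (fun s => hK.conjSinFlow s θ) (pullbackField K sin (hK.conjSinFlow t θ)) t :=
  hK.hasDerivAt_homeomorph_symm_integralCurve two_pi_pos (hasDerivAt_sinFlow t (K θ))

lemma conjSinFlow_zero (θ : ℝ) : hK.conjSinFlow 0 θ = θ := by
  rw [conjSinFlow, sinFlow_zero, hK.homeomorph_symm_apply]

lemma conjSinFlow_conjSinFlow (s t θ : ℝ) :
    hK.conjSinFlow s (hK.conjSinFlow t θ) = hK.conjSinFlow (s + t) θ := by
  simp only [conjSinFlow, hK.apply_homeomorph_symm, sinFlow_sinFlow]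

lemma conjSinFlow_add_two_pi (t θ : ℝ) :
    hK.conjSinFlow t (θ + 2 * π) = hK.conjSinFlow t θ + 2 * π := by
  simp only [conjSinFlow, hK.map_add_period, sinFlow_add_two_pi, hK.homeomorph_symm_add_period]

lemma strictMono_conjSinFlow (t : ℝ) : StrictMono (hK.conjSinFlow t) :=
  (hK.strictMono_homeomorph_symm two_pi_pos).comp ((strictMono_sinFlow t).comp hK.strictMono)

lemma bijective_conjSinFlow (t : ℝ) : Function.Bijective (hK.conjSinFlow t) :=
  (hK.homeomorph two_pi_pos).symm.bijective.comp
    ((bijective_sinFlow t).comp (hK.homeomorph two_pi_pos).bijective)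

lemma contDiffAt_conjSinFlow (t : ℝ) {θ : ℝ} (hθ : θ ∈ regularPoints π (2 * π)) :
    ContDiffAt ℝ ∞ (hK.conjSinFlow t) θ := by
  have hKθ := map_mem_regularPoints hK.strictMono.injective hK.map_add_period hK.map_self hθ
  have hflow := map_mem_regularPoints (bijective_sinFlow t).1 (sinFlow_add_two_pi t)
    (sinFlow_pi t) hKθ
  exact (hK.contDiffAt_homeomorph_symm two_pi_pos hflow).comp θ
    ((contDiff_sinFlow t).contDiffAt.comp θ (hK.contDiffAt two_pi_pos.ne' hθ))

-- Near `π` the composite is `sinFlow (-t)`, which is where the singularity of `γ` cancels.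
lemma contDiff_conjSinFlow_neg_comp {γ : ℝ → ℝ} {t : ℝ} (hinj : Function.Injective γ)
    (hper : ∀ θ, γ (θ + 2 * π) = γ θ + 2 * π) (hfix : γ π = π)
    (hsmooth : ContDiffOn ℝ ∞ γ (regularPoints π (2 * π)))
    (hconj : ∀ᶠ x in 𝓝 π, K (γ (sinFlow t x)) = sinFlow t (K x)) :
    ContDiff ℝ ∞ (hK.conjSinFlow (-t) ∘ γ) := by
  refine contDiff_of_contDiffOn_regularPoints (Q := 2 * π) two_pi_pos.ne'
    (fun θ => by simp only [Function.comp_apply, hper, hK.conjSinFlow_add_two_pi])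
    (fun θ hθ => (hK.contDiffAt_conjSinFlow (-t)
      (map_mem_regularPoints hinj hper hfix hθ)).comp_contDiffWithinAt θ (hsmooth θ hθ))
    ((contDiff_sinFlow (-t)).contDiffAt.congr_of_eventuallyEq ?_)
  have htendsto : Tendsto (sinFlow (-t)) (𝓝 π) (𝓝 π) :=
    (contDiff_sinFlow (-t)).continuous.tendsto' π π (sinFlow_pi (-t))
  filter_upwards [htendsto.eventually hconj] with θ hθ
  rw [sinFlow_sinFlow, add_neg_cancel, sinFlow_zero] at hθ
  rw [Function.comp_apply, conjSinFlow, hθ, sinFlow_sinFlow, neg_add_cancel, sinFlow_zero,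
    hK.homeomorph_symm_apply]

end IsPiecewiseSmoothLift

lemma OneSidedSmoothAtPi.piecewiseSmoothAt {f : ℝ → ℝ} (hf : OneSidedSmoothAtPi f)
    (hcont : Continuous f) (hsmooth : ContDiffOn ℝ ∞ f (regularPoints π (2 * π))) :
    PiecewiseSmoothAt f π := by
  obtain ⟨dp, dm, hlim⟩ := hf
  refine piecewiseSmoothAt_of_tendsto_iteratedDeriv hcont.continuousAt ?_
    (fun k => ⟨dp k, (hlim k).1⟩) (fun k => ⟨dm k, (hlim k).2⟩)
  filter_upwards [eventually_mem_regularPoints two_pi_pos] with x hx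
  exact hsmooth.contDiffAt ((isOpen_regularPoints two_pi_pos.ne').mem_nhds hx)

theorem PiecewiseSmoothAt.exists_conj_comp_sinFlow {γ : ℝ → ℝ} {t : ℝ} (ht : 0 < t)
    (hγ : PiecewiseSmoothAt γ π) (hfix : γ π = π) (hγ' : HasDerivAt γ 1 π) :
    ∃ K, IsPiecewiseSmoothLift K π (2 * π) ∧
      ∀ᶠ x in 𝓝 π, K (γ (sinFlow t x)) = sinFlow t (K x) := by
  refine PiecewiseSmoothAt.exists_conj_sinFlow ht
    (PiecewiseSmoothAt.comp_monotone (by rwa [sinFlow_pi])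
      (piecewiseSmoothAt_of_contDiff (contDiff_sinFlow t) π) (strictMono_sinFlow t).monotone)
    (by rw [sinFlow_pi, hfix]) ?_
  rw [← sinFlow_pi t] at hγ'
  exact (hγ'.comp π (hasDerivAt_sinFlow_pi t)).congr_deriv (one_mul _)

end SinFlow

/-- Lemma A.3: a lift `γ` of a piecewise smooth `C¹`-diffeomorphism of the circle whose
only nonsmooth point is `-1` (i.e. `θ = π`), fixing it with derivative `1`, factors as
`γ = Exp(g) ∘ γ̲` with `g` a piecewise smooth `C¹` vector field (nonsmooth only at
`π + 2πℤ`) and `γ̲` a lift of a smooth diffeomorphism. -/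
theorem stmt_14 (γ : ℝ → ℝ)
    (hmono : StrictMono γ) (hbij : Function.Bijective γ)
    (hC1 : ContDiff ℝ 1 γ)
    (hper : ∀ θ : ℝ, γ (θ + 2 * π) = γ θ + 2 * π)
    (hfix : γ π = π) (hd : deriv γ π = 1)
    (hsm : ContDiffOn ℝ (⊤ : ℕ∞) γ {θ : ℝ | ∀ m : ℤ, θ ≠ π + 2 * π * m})
    (hos : OneSidedSmoothAtPi γ) :
    ∃ (g : ℝ → ℝ) (φ : ℝ → ℝ → ℝ) (γ' : ℝ → ℝ),
      (∀ θ : ℝ, g (θ + 2 * π) = g θ) ∧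
      ContDiff ℝ 1 g ∧
      ContDiffOn ℝ (⊤ : ℕ∞) g {θ : ℝ | ∀ m : ℤ, θ ≠ π + 2 * π * m} ∧
      OneSidedSmoothAtPi g ∧
      (∀ t θ : ℝ, HasDerivAt (fun s => φ s θ) (g (φ t θ)) t) ∧
      (∀ θ : ℝ, φ 0 θ = θ) ∧
      ContDiff ℝ (⊤ : ℕ∞) γ' ∧ StrictMono γ' ∧ Function.Bijective γ' ∧
      (∀ θ : ℝ, γ' (θ + 2 * π) = γ' θ + 2 * π) ∧
      (∀ θ : ℝ, γ θ = φ 1 (γ' θ)) := by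
  have hγ' : HasDerivAt γ 1 π := hd ▸ (hC1.differentiable one_ne_zero π).hasDerivAt
  obtain ⟨K, hK, hconj⟩ := (hos.piecewiseSmoothAt hC1.continuous hsm).exists_conj_comp_sinFlow
    one_pos hfix hγ'
  refine ⟨pullbackField K Real.sin, hK.conjSinFlow, hK.conjSinFlow (-1) ∘ γ,
    hK.pullbackField_periodic Real.sin_periodic,
    hK.contDiff_pullbackField Real.two_pi_pos.ne' Real.contDiff_sin Real.sin_periodic Real.sin_pi,
    hK.contDiffOn_pullbackField Real.two_pi_pos.ne' Real.contDiff_sin,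
    (hK.piecewiseSmoothAt_pullbackField Real.contDiff_sin).oneSidedSmoothAtPi,
    hK.hasDerivAt_conjSinFlow, hK.conjSinFlow_zero,
    hK.contDiff_conjSinFlow_neg_comp hmono.injective hper hfix hsm hconj,
    (hK.strictMono_conjSinFlow (-1)).comp hmono, (hK.bijective_conjSinFlow (-1)).comp hbij,
    fun θ => ?_, fun θ => ?_⟩
  · rw [Function.comp_apply, hper, hK.conjSinFlow_add_two_pi, Function.comp_apply]
  · rw [Function.comp_apply, hK.conjSinFlow_conjSinFlow, add_neg_cancel, hK.conjSinFlow_zero]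
end
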